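/- arXiv:1108.4564 — 9 statements merged into one kernel-verified Lean document; each statement's English description precedes it below -/
import Mathlib

section
/- Let R be a commutative Noetherian ring, I an ideal of R, and E an injective R-module. Then the I-torsion submodule Γ_I(E) = {x ∈ E | I^n x = 0 for some natural number n} is also an injective R-module. -/
/-!
Suppose first that `R` is small relative to `E`, so that Baer's criterion is available for `E`.
Let `g : J → Γ_I(E)` be a map from an ideal. As `J` is finitely generated, a single power `I ^ n`
kills the image of `g`; by Artin–Rees, `I ^ m ∩ J ≤ I ^ n J` for some `m`, so `g` vanishes on
`I ^ m ∩ J` and factors through `J / (I ^ m ∩ J) ↪ R / I ^ m`. Injectivity of `E` extends this to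
`R / I ^ m → E`, whose image is killed by `I ^ m` and hence lies in `Γ_I(E)`
(`torsionGamma_baer`).

`Module.Injective R E` only tests modules in the universe of `E`, while `R` may live in a larger
one. In that case, an extension problem along `X ↪ Y` is transported to the
quotient `S` of `R` by the annihilator of `Y × E`. This ring embeds in the endomorphisms of `Y × E`,
so it is small, it is still Noetherian, `E` remains injective over it, and `Γ_{IS}(E) = Γ_I(E)`.
-/

/-- The `I`-torsion submodule `Γ_I(M) = {x ∈ M | I^n • x = 0 for some n ∈ ℕ}`. -/
def torsionGamma {R : Type*} [CommRing R] (I : Ideal R)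
    (M : Type*) [AddCommGroup M] [Module R M] : Submodule R M where
  carrier := {x | ∃ n : ℕ, ∀ r ∈ I ^ n, r • x = 0}
  zero_mem' := ⟨0, fun r _ => smul_zero r⟩
  add_mem' := by
    rintro a b ⟨n, hn⟩ ⟨m, hm⟩
    refine ⟨n + m, fun r hr => ?_⟩
    rw [smul_add, hn r (Ideal.pow_le_pow_right (Nat.le_add_right n m) hr),
      hm r (Ideal.pow_le_pow_right (Nat.le_add_left m n) hr), add_zero]
  smul_mem' := by
    rintro c x ⟨n, hn⟩
    exact ⟨n, fun r hr => by rw [smul_comm, hn r hr, smul_zero]⟩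

universe u v

/-- A linear map from a finitely generated module into `Γ_I(M)` has image killed by one power
of `I`. -/
lemma exists_pow_smul_eq_zero_of_finite {R : Type*} [CommRing R] (I : Ideal R)
    {M N : Type*} [AddCommGroup M] [Module R M] [AddCommGroup N] [Module R N] [Module.Finite R N]
    (g : N →ₗ[R] torsionGamma I M) :
    ∃ n : ℕ, ∀ r ∈ I ^ n, ∀ x, r • g x = 0 := by
  obtain ⟨s, hs⟩ := Module.Finite.fg_top (R := R) (M := N)
  choose k hk using fun x : N => (g x).2
  refine ⟨s.sup k, fun r hr x => ?_⟩
  have hx : x ∈ Submodule.span R (s : Set N) := hs ▸ Submodule.mem_top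
  induction hx using Submodule.span_induction with
  | mem x hx =>
    exact Subtype.ext (hk x r (Ideal.pow_le_pow_right (Finset.le_sup hx) hr))
  | zero => simp
  | add x y _ _ hx hy => rw [map_add, smul_add, hx, hy, add_zero]
  | smul a x _ hx => rw [map_smul, smul_comm, hx, smul_zero]

lemma torsionGamma_baer {R : Type*} [CommRing R] [IsNoetherianRing R] (I : Ideal R)
    {E : Type*} [AddCommGroup E] [Module R E] (hE : Module.Baer R E) :
    Module.Baer R (torsionGamma I E) := by
  intro J g
  obtain ⟨n, hn⟩ := exists_pow_smul_eq_zero_of_finite I g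
  obtain ⟨k, hk⟩ := I.exists_pow_inf_eq_pow_smul (M := R) J
  have hle : I ^ (n + k) ⊓ J ≤ I ^ n * J := by
    have h := hk (n + k) (Nat.le_add_left k n)
    simp only [smul_eq_mul, Ideal.mul_top, Nat.add_sub_cancel] at h
    exact h.le.trans (Ideal.mul_mono_right inf_le_right)
  have hg : ∀ x : J, (x : R) ∈ I ^ n * J → g x = 0 := by
    rintro ⟨x, hxJ⟩ hx
    have key : ∃ h : x ∈ J, g ⟨x, h⟩ = 0 := by
      refine Submodule.mul_induction_on (C := fun x => ∃ h : x ∈ J, g ⟨x, h⟩ = 0) hx ?_ ?_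
      · intro a ha b hb
        refine ⟨J.mul_mem_left a hb, ?_⟩
        rw [← hn a ha ⟨b, hb⟩, ← map_smul]
        rfl
      · rintro a b ⟨ha, hga⟩ ⟨hb, hgb⟩
        refine ⟨J.add_mem ha hb, ?_⟩
        have := map_add g ⟨a, ha⟩ ⟨b, hb⟩
        rw [hga, hgb, add_zero] at this
        exact this
    exact key.2
  let K : Submodule R J := Submodule.comap J.subtype (I ^ (n + k))
  let i : (J ⧸ K) →ₗ[R] (R ⧸ I ^ (n + k)) := K.mapQ (I ^ (n + k)) J.subtype le_rfl
  have hi : Function.Injective i := by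
    rw [← LinearMap.ker_eq_bot]
    exact Submodule.ker_liftQ_eq_bot _ _ _ (by
      rw [LinearMap.ker_comp, Submodule.ker_mkQ])
  let f : (J ⧸ K) →ₗ[R] E := K.liftQ ((torsionGamma I E).subtype ∘ₗ g) (fun x hx => by
    simp [hg x (hle ⟨hx, x.2⟩)])
  obtain ⟨h, hh⟩ := hE.extension_property i hi f
  refine ⟨(h ∘ₗ (I ^ (n + k)).mkQ).codRestrict _ fun x => ⟨n + k, fun r hr => ?_⟩, fun x hx => ?_⟩
  · have hz : (I ^ (n + k)).mkQ (r • x) = 0 :=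
      (Submodule.Quotient.mk_eq_zero (I ^ (n + k))).2 (Ideal.mul_mem_right x _ hr)
    rw [← map_smul, LinearMap.comp_apply, hz, map_zero]
  · exact Subtype.ext (LinearMap.congr_fun hh (K.mkQ ⟨x, hx⟩))

/-- Injectivity descends along a surjection `R → S` to an `S`-module that is injective
over `R`. -/
lemma injective_of_surjective_algebraMap {R : Type*} {S : Type*} [CommRing R] [CommRing S]
    [Algebra R S] (hS : Function.Surjective (algebraMap R S))
    (E : Type*) [AddCommGroup E] [Module R E] [Module S E] [IsScalarTower R S E]
    [Module.Injective R E] : Module.Injective S E where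
  out X Y _ _ _ _ i hi f := by
    let : Module R X := Module.compHom X (algebraMap R S)
    let : Module R Y := Module.compHom Y (algebraMap R S)
    have : IsScalarTower R S X := IsScalarTower.of_algebraMap_smul fun _ _ => rfl
    have : IsScalarTower R S Y := IsScalarTower.of_algebraMap_smul fun _ _ => rfl
    obtain ⟨h, hh⟩ := Module.Injective.out (i.restrictScalars R) hi (f.restrictScalars R)
    exact ⟨h.extendScalarsOfSurjective hS, hh⟩

lemma mem_torsionGamma_map_iff {R : Type*} {S : Type*} [CommRing R] [CommRing S]
    [Algebra R S] (hS : Function.Surjective (algebraMap R S)) (I : Ideal R)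
    {E : Type*} [AddCommGroup E] [Module R E] [Module S E] [IsScalarTower R S E] (x : E) :
    x ∈ torsionGamma (I.map (algebraMap R S)) E ↔ x ∈ torsionGamma I E := by
  refine exists_congr fun n => ?_
  rw [← Ideal.map_pow]
  refine ⟨fun h r hr => ?_, fun h s hs => ?_⟩
  · rw [← algebraMap_smul S r x]
    exact h _ (Ideal.mem_map_of_mem _ hr)
  · obtain ⟨r, hr, rfl⟩ := (Ideal.mem_map_iff_of_surjective _ hS).1 hs
    rw [algebraMap_smul]
    exact h r hr

/-- The quotient of a ring by the annihilator of a module embeds in the self-maps of that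
module. -/
lemma small_quotient_annihilator (R : Type u) [CommRing R] (M : Type v) [AddCommGroup M]
    [Module R M] : Small.{v} (R ⧸ Module.annihilator R M) := by
  let φ : (R ⧸ Module.annihilator R M) →+* Module.End R M :=
    Ideal.Quotient.lift _ (algebraMap R (Module.End R M)) fun r hr =>
      LinearMap.ext fun m => Module.mem_annihilator.1 hr m
  have hφ : Function.Injective φ := by
    refine RingHom.lift_injective_of_ker_le_ideal _ _ fun r hr => ?_
    exact Module.mem_annihilator.2 fun m => LinearMap.congr_fun (RingHom.mem_ker.1 hr) m
  exact small_of_injective (β := M → M) (f := fun s => ⇑(φ s)) (DFunLike.coe_injective.comp hφ)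

/-- If `R` is a commutative Noetherian ring, `I` an ideal of `R` and `E` an injective
`R`-module, then the `I`-torsion submodule `Γ_I(E)` is an injective `R`-module. -/
theorem torsionGamma_injective (R : Type*) [CommRing R] [IsNoetherianRing R] (I : Ideal R)
    (E : Type*) [AddCommGroup E] [Module R E] [Module.Injective R E] :
    Module.Injective R (torsionGamma I E) := by
  refine ⟨fun X Y _ _ _ _ i hi f => ?_⟩
  let A := Module.annihilator R (Y × E)
  have hA : ∀ a ∈ A, ∀ (y : Y) (e : E), a • y = 0 ∧ a • e = 0 := fun a ha y e =>
    Prod.ext_iff.1 (Module.mem_annihilator.1 ha (y, e))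
  have hY : Module.IsTorsionBySet R Y A := fun y a => (hA a a.2 y 0).1
  have hE : Module.IsTorsionBySet R E A := fun e a => (hA a a.2 0 e).2
  have hX : Module.IsTorsionBySet R X A := fun x a =>
    hi (by rw [map_smul, map_zero]; exact (hA a a.2 (i x) 0).1)
  let : Module (R ⧸ A) X := hX.module
  let : Module (R ⧸ A) Y := hY.module
  let : Module (R ⧸ A) E := hE.module
  have : IsScalarTower R (R ⧸ A) X := hX.isScalarTower
  have : IsScalarTower R (R ⧸ A) Y := hY.isScalarTower
  have : IsScalarTower R (R ⧸ A) E := hE.isScalarTower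
  have hS : Function.Surjective (algebraMap R (R ⧸ A)) := Ideal.Quotient.mk_surjective
  have := small_quotient_annihilator R (Y × E)
  have hinj : Module.Injective (R ⧸ A) E := injective_of_surjective_algebraMap hS E
  have hB := torsionGamma_baer (I.map (algebraMap R (R ⧸ A))) (Module.Baer.of_injective hinj)
  let f' : X →ₗ[R ⧸ A] torsionGamma (I.map (algebraMap R (R ⧸ A))) E :=
    (((torsionGamma I E).subtype ∘ₗ f).extendScalarsOfSurjective hS).codRestrict _ fun x =>
      (mem_torsionGamma_map_iff hS I _).2 (f x).2
  obtain ⟨h, hh⟩ := hB.extension_property (i.extendScalarsOfSurjective hS) hi f'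
  refine ⟨((Submodule.subtype _ ∘ₗ h).restrictScalars R).codRestrict _ fun y =>
    (mem_torsionGamma_map_iff hS I _).1 (h y).2, fun x => Subtype.ext ?_⟩
  have hx : (h (i x) : E) = f x := congrArg Subtype.val (LinearMap.congr_fun hh x)
  exact hx
end

section
/- Let R be a commutative Noetherian ring, k a nonnegative integer, and M an R-module such that Supp(M) ∩ A(R,k) is an infinite set. If p_1, …, p_n are prime ideals of R with {p_1, …, p_n} ⊆ Ass(M) ∩ A(R,k), then there exist a prime ideal p_{n+1} and a nonzero element x ∈ M such that: (1) p_{n+1} ∈ (Supp(M) ∩ A(R,k)) \ {p_1, …, p_n}; (2) Ann_R(x) ⊆ p_{n+1}; and (3) Rx ∩ Γ_{p_1⋯p_n}(M) = 0. -/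
/-- `A(R, k)` is the set of primes `p` of `R` with `dim (R / p) = k`. -/
def dimSet (R : Type*) [CommRing R] (k : ℕ) : Set (PrimeSpectrum R) :=
  {p | ringKrullDim (R ⧸ p.asIdeal) = k}

/-- Strictly enlarging a prime strictly lowers a finite dimension of the quotient. -/
lemma eq_of_le_of_mem_dimSet {R : Type*} [CommRing R] {k : ℕ} {p q : PrimeSpectrum R}
    (hp : p ∈ dimSet R k) (hq : q ∈ dimSet R k) (h : p.asIdeal ≤ q.asIdeal) : p = q := by
  by_contra hne
  have hnle : ¬ q.asIdeal ≤ p.asIdeal := fun h' => hne (PrimeSpectrum.ext (le_antisymm h h'))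
  obtain ⟨r, hrq, hrp⟩ := SetLike.not_le_iff_exists.mp hnle
  have hr : Ideal.Quotient.mk p.asIdeal r ∈ nonZeroDivisors (R ⧸ p.asIdeal) :=
    mem_nonZeroDivisors_of_ne_zero (by rwa [Ne, Ideal.Quotient.eq_zero_iff_mem])
  have hle := ringKrullDim_succ_le_of_surjective (Ideal.Quotient.factor h)
    (Ideal.Quotient.factor_surjective h) hr
    (by rw [Ideal.Quotient.factor_mk]; exact Ideal.Quotient.eq_zero_iff_mem.mpr hrq)
  have hp' : ringKrullDim (R ⧸ p.asIdeal) = k := hp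
  have hq' : ringKrullDim (R ⧸ q.asIdeal) = k := hq
  rw [hp', hq'] at hle
  have : k + 1 ≤ k := by exact_mod_cast hle
  omega

/-- Every prime in the support of a module over a Noetherian ring contains an associated prime,
given here as the annihilator `P` of an element `x`. -/
lemma exists_isPrime_le_of_mem_support {R : Type*} [CommRing R] [IsNoetherianRing R]
    {M : Type*} [AddCommGroup M] [Module R M] {q : PrimeSpectrum R} (hq : q ∈ Module.support R M) :
    ∃ (P : Ideal R) (x : M), P.IsPrime ∧ P ≤ q.asIdeal ∧ ∀ r, r ∈ P ↔ r • x = 0 := by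
  obtain ⟨m, hm⟩ := Module.mem_support_iff_exists_annihilator.mp hq
  obtain ⟨P, hP, hPq⟩ := Ideal.exists_minimalPrimes_le hm
  have hass : IsAssociatedPrime P (Submodule.span R {m}) :=
    Module.associatedPrimes.minimalPrimes_annihilator_subset_associatedPrimes R _ hP
  obtain ⟨hprime, x, hx⟩ := isAssociatedPrime_iff.mp
    (hass.map_of_injective (Submodule.span R {m}).subtype (Submodule.subtype_injective _))
  refine ⟨P, x, hprime, hPq, fun r => ?_⟩
  rw [hx, Submodule.mem_colon_singleton, Submodule.mem_bot]

/-- If `Supp M ∩ A(R, k)` is infinite and `p 1, …, p n` are primes contained in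
`Ass M ∩ A(R, k)`, then there are a prime `q` and a nonzero `x ∈ M` with
`q ∈ (Supp M ∩ A(R, k)) \ {p 1, …, p n}`, `Ann x ⊆ q` and `Rx ∩ Γ_{p 1 ⋯ p n}(M) = 0`. -/
theorem exists_prime_and_elem {R : Type*} [CommRing R] [IsNoetherianRing R] (k : ℕ)
    {M : Type*} [AddCommGroup M] [Module R M]
    (hinf : (Module.support R M ∩ dimSet R k).Infinite)
    (n : ℕ) (p : Fin n → PrimeSpectrum R)
    (hp : ∀ i, (p i).asIdeal ∈ associatedPrimes R M ∧ p i ∈ dimSet R k) :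
    ∃ (q : PrimeSpectrum R) (x : M), x ≠ 0 ∧
      q ∈ (Module.support R M ∩ dimSet R k) \ Set.range p ∧
      (Submodule.span R {x}).annihilator ≤ q.asIdeal ∧
      Submodule.span R {x} ⊓ torsionGamma (∏ i, (p i).asIdeal) M = ⊥ := by
  obtain ⟨q, hq, hqp⟩ := (hinf.sdiff (Set.finite_range p)).nonempty
  obtain ⟨P, x, hP, hPq, hx⟩ := exists_isPrime_le_of_mem_support hq.1
  refine ⟨q, x, ?_, ⟨hq, hqp⟩, ?_, ?_⟩
  · rintro rfl
    exact hP.ne_top ((Ideal.eq_top_iff_one P).mpr ((hx 1).mpr (smul_zero 1)))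
  · intro r hr
    rw [Submodule.mem_annihilator_span_singleton] at hr
    exact hPq ((hx r).mpr hr)
  · rw [Submodule.eq_bot_iff]
    rintro y ⟨hy, N, hN⟩
    obtain ⟨a, rfl⟩ := Submodule.mem_span_singleton.mp hy
    rw [← hx]
    by_contra ha
    have hpow : (∏ i, (p i).asIdeal) ^ N ≤ P := fun r hr => by
      have hra := hN r hr
      rw [smul_smul, ← hx] at hra
      exact (hP.mem_or_mem hra).resolve_right ha
    obtain ⟨i, -, hi⟩ := (Ideal.IsPrime.prod_le hP).mp (hP.le_of_pow_le hpow)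
    exact hqp ⟨i, eq_of_le_of_mem_dimSet (hp i).2 hq.2 (hi.trans hPq)⟩
end

section
/- Let R be a commutative Noetherian ring, k a nonnegative integer, and M an R-module such that for every finitely generated submodule N of M the intersection Supp(M/N) ∩ A(R,k) is an infinite set. Then there exists a submodule L of M such that Ass(M/L) ∩ A(R,k) is an infinite set. -/
/-- `A(R, k)` is an antichain: a strict inclusion `p < q` lowers the finite dimension. -/
lemma dimSet_eq_of_le {R : Type*} [CommRing R] {k : ℕ} {p q : PrimeSpectrum R}
    (hp : p ∈ dimSet R k) (hq : q ∈ dimSet R k) (hle : p.asIdeal ≤ q.asIdeal) : p = q := by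
  have key : ∀ p : PrimeSpectrum R, p ∈ dimSet R k → Order.coheight p = k := by
    intro p hp
    have h1 : ringKrullDim (R ⧸ p.asIdeal) = k := hp
    rw [ringKrullDim_quotient] at h1
    have h2 : PrimeSpectrum.zeroLocus (p.asIdeal : Set R) = Set.Ici p := by
      ext x
      simp [PrimeSpectrum.mem_zeroLocus, ← PrimeSpectrum.asIdeal_le_asIdeal]
    rw [h2, ← Order.coheight_eq_krullDim_Ici] at h1
    exact_mod_cast h1
  by_contra hne
  have hlt : p < q := lt_of_le_of_ne hle hne
  have := Order.coheight_strictAnti hlt (by rw [key q hq]; exact ENat.natCast_lt_top k)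
  rw [key p hp, key q hq] at this
  exact lt_irrefl _ this

/-- One step of the construction: adjoin `p z` to `L` so that `p` becomes a colon ideal, while
every `x` whose annihilator modulo `L` is one of the finitely many primes in `F` keeps it. -/
lemma exists_enlarge {R : Type*} [CommRing R] [IsNoetherianRing R]
    {M : Type*} [AddCommGroup M] [Module R M] (L : Submodule R M) (hL : L.FG)
    (F : Finset (PrimeSpectrum R)) (p : PrimeSpectrum R)
    (hp : p ∈ Module.support R (M ⧸ L)) (hF : ∀ q ∈ F, ¬ q.asIdeal ≤ p.asIdeal) :
    ∃ L' : Submodule R M, L'.FG ∧ L ≤ L' ∧ (∃ z : M, ∀ r : R, r • z ∈ L' ↔ r ∈ p.asIdeal) ∧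
      ∀ q ∈ F, ∀ x : M, (∀ r : R, r • x ∈ L ↔ r ∈ q.asIdeal) →
        ∀ r : R, r • x ∈ L' ↔ r ∈ q.asIdeal := by
  obtain ⟨y, hy⟩ : ∃ y : M, ∀ r : R, r • y ∈ L → r ∈ p.asIdeal := by
    obtain ⟨m, hm⟩ := Module.mem_support_iff'.1 hp
    obtain ⟨y, rfl⟩ := L.mkQ_surjective m
    refine ⟨y, fun r hr => ?_⟩
    by_contra hrp
    refine hm r hrp ?_
    rw [← map_smul, Submodule.mkQ_apply, Submodule.Quotient.mk_eq_zero]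
    exact hr
  obtain ⟨s, hsF, hsp⟩ : ∃ s : R, (∀ q ∈ F, s ∈ q.asIdeal) ∧ s ∉ p.asIdeal := by
    have h1 : ¬ F.inf PrimeSpectrum.asIdeal ≤ p.asIdeal := by
      rw [Ideal.IsPrime.inf_le' p.isPrime]
      rintro ⟨q, hq, hle⟩
      exact hF q hq hle
    obtain ⟨s, hs, hsp⟩ := SetLike.not_le_iff_exists.1 h1
    exact ⟨s, fun q hq => (Finset.inf_le hq : F.inf PrimeSpectrum.asIdeal ≤ _) hs, hsp⟩
  let I : ℕ →o Ideal R :=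
    { toFun := fun m => L.comap (LinearMap.toSpanSingleton R M (s ^ m • y))
      monotone' := by
        refine monotone_nat_of_le_succ fun m r hr => ?_
        simp only [Submodule.mem_comap, LinearMap.toSpanSingleton_apply] at hr ⊢
        have := L.smul_mem s hr
        convert this using 1
        simp only [smul_smul]
        congr 1
        ring }
  obtain ⟨m, hm⟩ := monotone_stabilizes_iff_noetherian.2 ‹IsNoetherianRing R› I
  set z := s ^ m • y with hz
  have hstab : ∀ a : R, s • a • z ∈ L → a • z ∈ L := by
    intro a ha
    have h1 : a ∈ I (m + 1) := by
      change a • (s ^ (m + 1) • y) ∈ L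
      convert ha using 1
      simp only [hz, smul_smul]
      congr 1
      ring
    rw [← hm (m + 1) (Nat.le_succ m)] at h1
    exact h1
  have hzp : ∀ r : R, r • z ∈ L → r ∈ p.asIdeal := by
    intro r hr
    rw [hz, smul_smul] at hr
    exact (p.isPrime.mem_or_mem (hy _ hr)).resolve_right
      fun h => hsp (p.isPrime.mem_of_pow_mem _ h)
  have hmem : ∀ v : M, v ∈ L ⊔ Submodule.map (LinearMap.toSpanSingleton R M z) p.asIdeal ↔
      ∃ a ∈ p.asIdeal, v - a • z ∈ L := by
    intro v
    rw [Submodule.mem_sup]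
    constructor
    · rintro ⟨l, hl, _, ⟨a, ha, rfl⟩, rfl⟩
      exact ⟨a, ha, by simpa using hl⟩
    · rintro ⟨a, ha, h⟩
      exact ⟨_, h, _, ⟨a, ha, rfl⟩, by simp⟩
  refine ⟨L ⊔ Submodule.map (LinearMap.toSpanSingleton R M z) p.asIdeal,
    hL.sup ((IsNoetherian.noetherian p.asIdeal).map _), le_sup_left,
    ⟨z, fun r => ?_⟩, fun q hq x hx r => ?_⟩
  · refine (hmem _).trans ⟨?_, fun hr => ⟨r, hr, by simp⟩⟩
    rintro ⟨a, ha, h⟩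
    rw [← sub_smul] at h
    exact (Submodule.sub_mem_iff_left _ ha).1 (hzp _ h)
  · refine ⟨fun h => ?_, fun hr => le_sup_left (a := L) ((hx r).2 hr)⟩
    obtain ⟨a, -, h⟩ := (hmem _).1 h
    have h1 : s • r • x ∈ L := by
      rw [smul_comm]
      exact L.smul_mem r ((hx s).2 (hsF q hq))
    have h2 : s • a • z ∈ L := by
      have := L.sub_mem h1 (L.smul_mem s h)
      rwa [smul_sub, sub_sub_cancel] at this
    exact (hx r).1 ((Submodule.sub_mem_iff_left _ (hstab a h2)).1 h)

/-- If for every finitely generated submodule `N` of `M` the set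
`Supp (M / N) ∩ A(R, k)` is infinite, then there is a submodule `L` of `M` such that
`Ass (M / L) ∩ A(R, k)` is infinite. -/
theorem exists_submodule_infinite_ass {R : Type*} [CommRing R] [IsNoetherianRing R] (k : ℕ)
    {M : Type*} [AddCommGroup M] [Module R M]
    (h : ∀ N : Submodule R M, N.FG → (Module.support R (M ⧸ N) ∩ dimSet R k).Infinite) :
    ∃ L : Submodule R M,
      ({q : PrimeSpectrum R | q.asIdeal ∈ associatedPrimes R (M ⧸ L)} ∩ dimSet R k).Infinite := by
  classical
  -- The stages of the construction: `L` finitely generated, `F` a finite set of primes of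
  -- `A(R, k)`, each of which is the annihilator of some element modulo `L`.
  let T := {t : Submodule R M × Finset (PrimeSpectrum R) // t.1.FG ∧
    ∀ q ∈ t.2, q ∈ dimSet R k ∧ ∃ x : M, ∀ r : R, r • x ∈ t.1 ↔ r ∈ q.asIdeal}
  have step : ∀ t : T, ∃ t' : T, t.1.1 ≤ t'.1.1 ∧ t.1.2 ⊂ t'.1.2 ∧
      ∀ q ∈ t.1.2, ∀ x : M, (∀ r : R, r • x ∈ t.1.1 ↔ r ∈ q.asIdeal) →
        ∀ r : R, r • x ∈ t'.1.1 ↔ r ∈ q.asIdeal := by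
    rintro ⟨⟨L, F⟩, hL, hF⟩
    obtain ⟨p, ⟨hps, hpd⟩, hpF⟩ := (h L hL).exists_notMem_finset F
    obtain ⟨L', hL', hle, hz, hpres⟩ := exists_enlarge L hL F p hps fun q hq hqp =>
      hpF (dimSet_eq_of_le (hF q hq).1 hpd hqp ▸ hq)
    refine ⟨⟨⟨L', insert p F⟩, hL', fun q hq => ?_⟩, hle, Finset.ssubset_insert hpF, hpres⟩
    rcases Finset.mem_insert.1 hq with rfl | hq
    · exact ⟨hpd, hz⟩
    · obtain ⟨hd, x, hx⟩ := hF q hq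
      exact ⟨hd, x, hpres q hq x hx⟩
  choose next hnext using step
  let t : ℕ → T := fun n => Nat.rec ⟨⟨⊥, ∅⟩, Submodule.fg_bot, by simp⟩ (fun _ => next) n
  have hLmono : Monotone fun n => (t n).1.1 :=
    monotone_nat_of_le_succ fun n => (hnext (t n)).1
  have hFmono : StrictMono fun n => (t n).1.2 :=
    strictMono_nat_of_lt_succ fun n => (hnext (t n)).2.1
  have hpres : ∀ n m, n ≤ m → ∀ q ∈ (t n).1.2, ∀ x : M,
      (∀ r : R, r • x ∈ (t n).1.1 ↔ r ∈ q.asIdeal) →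
        ∀ r : R, r • x ∈ (t m).1.1 ↔ r ∈ q.asIdeal := by
    intro n m hnm q hq x hx
    induction m, hnm using Nat.le_induction with
    | base => exact hx
    | succ m hnm ih => exact (hnext (t m)).2.2 q (hFmono.monotone hnm hq) x ih
  refine ⟨⨆ n, (t n).1.1, fun hfin => ?_⟩
  have hsub : ∀ n, (t n).1.2 ⊆ hfin.toFinset := by
    intro n q hq
    obtain ⟨hd, x, hx⟩ := (t n).2.2 q hq
    refine hfin.mem_toFinset.2 ⟨?_, hd⟩
    refine isAssociatedPrime_iff.2 ⟨q.isPrime, Submodule.Quotient.mk x, ?_⟩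
    ext r
    rw [Submodule.mem_colon_singleton, Submodule.mem_bot, ← Submodule.Quotient.mk_smul,
      Submodule.Quotient.mk_eq_zero, Submodule.mem_iSup_of_directed _ hLmono.directed_le]
    constructor
    · exact fun hr => ⟨n, (hx r).2 hr⟩
    · rintro ⟨m, hm⟩
      exact (hpres n (max n m) (le_max_left _ _) q hq x hx r).1 (hLmono (le_max_right n m) hm)
  -- A strictly increasing sequence of subsets of a finite set is impossible.
  have hcard : StrictMono fun n => (t n).1.2.card := Finset.card_strictMono.comp hFmono
  have h1 := hcard.le_apply (x := hfin.toFinset.card + 1)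
  have h2 := Finset.card_le_card (hsub (hfin.toFinset.card + 1))
  omega
end

section
/- Let R be a commutative Noetherian ring and M a nonzero R-module. Then M is a weakly Laskerian R-module if and only if M is an FSF R-module. -/
/-!
If `N` is finitely generated with `Supp (M / N)` finite, then for every `K ≤ M` the module `M / K`
is an extension of a quotient of `M / N`, whose associated primes lie in `Supp (M / N)`, by a
quotient of `N`, which is finitely generated; hence `Ass (M / K)` is finite.

For the converse, assume that `Supp (M / N)` is infinite for every finitely generated `N`; a
submodule `K` with `Ass (M / K)` infinite is constructed as the union of a chain `K 0 ≤ K 1 ≤ ⋯`.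
It comes with finitely generated submodules `N i ≥ K i` such that `K (i + 1) ∩ N i = K i`, and with
ideals `J i` such that `J i • N i ≤ K i` and `V(J i)` is finite.

In the step from `i` to `i + 1`, the specialization-closed infinite set `Supp (M / N i)` contains
infinitely many primes `q` with `V(q)` finite (`infinite_setOf_finite_Ici`), so one of them lies
outside `V(J i)`. Let `x ∈ M` have annihilator modulo `N i` contained in `q`, and put
`N (i + 1) = N i + R x`. By Artin-Rees, `J i ^ n • N (i + 1) ∩ N i ≤ J i • N i ≤ K i` for some
`n > 0`. Put `J (i + 1) = J i ^ n * q` and `K (i + 1) = K i + J (i + 1) • N (i + 1)`. For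
`f ∈ J i ^ n \ q`, the annihilator of `f x` modulo `K (i + 1)` is exactly `q`
(`ApproxStage.exists_next`). Since `K ∩ N i = K i` for all `i`, all these primes are associated to
`M / K`, and they are distinct because `q` contains `J (i + 1)` but not `J i`.
-/

section

variable {R : Type*} [CommRing R]

/-- If there were only finitely many such primes, then a prime of `X` maximal among those with
infinitely many primes above it would have only finitely many primes strictly above it. -/
lemma infinite_setOf_finite_Ici [IsNoetherianRing R] {X : Set (PrimeSpectrum R)}
    (hX : X.Infinite) (hup : IsUpperSet X) : {q ∈ X | (Set.Ici q).Finite}.Infinite := by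
  intro hF
  obtain ⟨p₀, hp₀X, hp₀⟩ : ∃ p ∈ X, (Set.Ici p).Infinite := by
    by_contra! h
    exact hX (hF.subset fun p hp ↦ ⟨hp, by simpa using h p hp⟩)
  obtain ⟨_, ⟨p, ⟨hpX, hp⟩, rfl⟩, hmax⟩ := set_has_maximal_iff_noetherian.mpr ‹IsNoetherian R R›
    (PrimeSpectrum.asIdeal '' {p ∈ X | (Set.Ici p).Infinite}) ⟨_, p₀, ⟨hp₀X, hp₀⟩, rfl⟩
  refine hp ((hF.insert p).subset fun q hq ↦ ?_)
  rcases eq_or_lt_of_le (show p ≤ q from hq) with rfl | hlt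
  · exact Set.mem_insert _ _
  · refine Set.mem_insert_of_mem _ ⟨hup hq hpX, ?_⟩
    by_contra hqi
    exact hmax _ ⟨q, ⟨hup hq hpX, hqi⟩, rfl⟩ hlt

variable {M : Type*} [AddCommGroup M] [Module R M]

/-- A weak form of the Artin-Rees lemma, for submodules of an ambient module. -/
lemma exists_pow_smul_inf_le [IsNoetherianRing R] (J : Ideal R) {N L : Submodule R M}
    (hL : L.FG) (hNL : N ≤ L) : ∃ n, n ≠ 0 ∧ J ^ n • L ⊓ N ≤ J • N := by
  have : Module.Finite R L := Module.Finite.iff_fg.mpr hL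
  obtain ⟨k, hk⟩ := J.exists_pow_inf_eq_pow_smul (N.comap L.subtype)
  refine ⟨k + 1, by simp, ?_⟩
  have h := hk (k + 1) (by simp)
  have h1 : J ^ (k + 1) • (⊤ : Submodule R L) ⊓ N.comap L.subtype ≤ J • N.comap L.subtype := by
    rw [h, Nat.add_sub_cancel_left, pow_one]
    exact Submodule.smul_mono le_rfl inf_le_right
  have h2 := Submodule.map_mono (f := L.subtype) h1
  rw [Submodule.map_smul'', Submodule.map_inf _ L.injective_subtype, Submodule.map_smul'',
    Submodule.map_top, Submodule.range_subtype, Submodule.map_comap_subtype,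
    inf_eq_right.mpr hNL] at h2
  exact h2

variable (R M) in
/-- A finite stage of the construction of a submodule `K` with `Ass (M / K)` infinite. -/
structure ApproxStage where
  /-- The finitely generated part of `M` on which the final submodule is already determined. -/
  N : Submodule R M
  /-- The intersection of the final submodule with `N`. -/
  K : Submodule R M
  /-- An ideal annihilating `N / K`, contained in all the associated primes produced so far. -/
  J : Ideal R
  fg : N.FG
  le : K ≤ N
  smul_le : J • N ≤ K
  finite : {p : PrimeSpectrum R | J ≤ p.asIdeal}.Finite

/-- One step of the construction: enlarge a stage so as to create a new associated prime `q`. -/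
lemma ApproxStage.exists_next [IsNoetherianRing R]
    (H : ∀ N : Submodule R M, N.FG → (Module.support R (M ⧸ N)).Infinite) (s : ApproxStage R M) :
    ∃ (t : ApproxStage R M) (q : Ideal R) (y : M), s.N ≤ t.N ∧ s.K ≤ t.K ∧ t.J ≤ s.J ∧
      t.K ⊓ s.N ≤ s.K ∧ q.IsPrime ∧ t.J ≤ q ∧ ¬ s.J ≤ q ∧ y ∈ t.N ∧
      ∀ r, r • y ∈ t.K ↔ r ∈ q := by
  obtain ⟨N, K, J, hfg, hKN, hJ, hfin⟩ := s
  obtain ⟨q, ⟨hqs, hqfin⟩, hqJ⟩ := (infinite_setOf_finite_Ici (H N hfg)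
    (fun _ _ h h' ↦ Module.mem_support_mono h h')).exists_notMem_finite hfin
  have hqJ : ¬ J ≤ q.asIdeal := hqJ
  obtain ⟨m, hm⟩ := Module.mem_support_iff'.mp hqs
  obtain ⟨x, rfl⟩ := N.mkQ_surjective m
  have hx : ∀ r, r • x ∈ N → r ∈ q.asIdeal := by
    intro r hr
    by_contra hrq
    apply hm r hrq
    rwa [← map_smul, Submodule.mkQ_apply, Submodule.Quotient.mk_eq_zero]
  set L := N ⊔ Submodule.span R {x} with hLdef
  have hL : L.FG := hfg.sup (Submodule.fg_span_singleton x)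
  have hNL : N ≤ L := le_sup_left
  have hxL : x ∈ L := Submodule.mem_sup_right (Submodule.mem_span_singleton_self x)
  obtain ⟨n, hn0, hn⟩ := exists_pow_smul_inf_le J hL hNL
  have hJq : ¬ J ^ n ≤ q.asIdeal := fun h ↦ hqJ (q.2.le_of_pow_le h)
  obtain ⟨f, hfJ, hfq⟩ := SetLike.not_le_iff_exists.mp hJq
  have hIJ : J ^ n * q.asIdeal ≤ J ^ n := Ideal.mul_le_inf.trans inf_le_left
  have hIq : J ^ n * q.asIdeal ≤ q.asIdeal := Ideal.mul_le_inf.trans inf_le_right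
  refine ⟨⟨L, K ⊔ (J ^ n * q.asIdeal) • L, J ^ n * q.asIdeal, hL,
    sup_le (hKN.trans hNL) Submodule.smul_le_right, le_sup_right, ?_⟩, q.asIdeal, f • x, hNL,
    le_sup_left, hIJ.trans (Ideal.pow_le_self hn0), ?_, q.2, hIq, hqJ, L.smul_mem f hxL, ?_⟩
  · refine (hfin.union hqfin).subset fun p hp ↦ ?_
    rcases p.2.mul_le.mp hp with h | h
    · exact Or.inl (p.2.le_of_pow_le h)
    · exact Or.inr h
  · -- modular law, using `K ≤ N`
    rw [sup_inf_assoc_of_le _ hKN]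
    exact sup_le le_rfl
      (((inf_le_inf_right N (Submodule.smul_mono_left hIJ)).trans hn).trans hJ)
  · intro r
    constructor
    · intro hr
      have hle : K ⊔ (J ^ n * q.asIdeal) • L ≤ N ⊔ q.asIdeal • Submodule.span R {x} := by
        refine sup_le (hKN.trans le_sup_left) ((Submodule.smul_mono_left hIq).trans ?_)
        rw [hLdef, Submodule.smul_sup]
        exact sup_le_sup_right Submodule.smul_le_right _
      obtain ⟨a, ha, b, hb, hab⟩ := Submodule.mem_sup.mp (hle hr)
      obtain ⟨c, hc, rfl⟩ := Submodule.mem_smul_span_singleton.mp hb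
      have h1 : (r * f - c) • x ∈ N := by
        rw [sub_smul, mul_smul, ← hab, add_sub_cancel_right]
        exact ha
      have h2 : r * f ∈ q.asIdeal := by simpa using q.asIdeal.add_mem (hx _ h1) hc
      exact (q.2.mem_or_mem h2).resolve_right hfq
    · intro hr
      refine Submodule.mem_sup_right ?_
      rw [smul_smul, mul_comm r f]
      exact Submodule.smul_mem_smul (Ideal.mul_mem_mul hfJ hr) hxL

lemma mem_associatedPrimes_quotient [IsNoetherianRing R] {K : Submodule R M} {q : Ideal R}
    (hq : q.IsPrime) {y : M} (h : ∀ r, r • y ∈ K ↔ r ∈ q) :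
    q ∈ associatedPrimes R (M ⧸ K) := by
  rw [AssociatedPrimes.mem_iff, isAssociatedPrime_iff]
  refine ⟨hq, K.mkQ y, ?_⟩
  ext r
  rw [Submodule.mem_colon_singleton, Submodule.mem_bot, ← map_smul, Submodule.mkQ_apply,
    Submodule.Quotient.mk_eq_zero, h]

lemma exists_infinite_associatedPrimes [IsNoetherianRing R]
    (H : ∀ N : Submodule R M, N.FG → (Module.support R (M ⧸ N)).Infinite) :
    ∃ K : Submodule R M, (associatedPrimes R (M ⧸ K)).Infinite := by
  choose next q y hN hK hJ hinf hq hJq hqJ hy hcolon using ApproxStage.exists_next H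
  let s₀ : ApproxStage R M :=
    { N := ⊥, K := ⊥, J := ⊤, fg := Submodule.fg_bot, le := le_rfl, smul_le := by simp
      finite := by
        convert Set.finite_empty
        ext p
        simpa using p.2.ne_top }
  let s : ℕ → ApproxStage R M := fun n ↦ Nat.rec s₀ (fun _ t ↦ next t) n
  have hNmono : Monotone fun i ↦ (s i).N := monotone_nat_of_le_succ fun i ↦ hN (s i)
  have hKmono : Monotone fun i ↦ (s i).K := monotone_nat_of_le_succ fun i ↦ hK (s i)
  have hJanti : Antitone fun i ↦ (s i).J := antitone_nat_of_succ_le fun i ↦ hJ (s i)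
  have hKN : ∀ i d, (s (i + d)).K ⊓ (s i).N ≤ (s i).K := by
    intro i d
    induction d with
    | zero => exact inf_le_left
    | succ d ih =>
      refine le_trans (le_inf ?_ inf_le_right) ih
      exact (inf_le_inf_left _ (hNmono (Nat.le_add_right i d))).trans (hinf (s (i + d)))
  have hmem : ∀ i, ∀ z ∈ (s i).N, z ∈ ⨆ j, (s j).K ↔ z ∈ (s i).K := by
    intro i z hz
    refine ⟨fun h ↦ ?_, fun h ↦ Submodule.mem_iSup_of_mem i h⟩
    obtain ⟨j, hj⟩ := (Submodule.mem_iSup_of_directed _ hKmono.directed_le).mp h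
    exact hKN i j ⟨hKmono (Nat.le_add_left j i) hj, hz⟩
  refine ⟨⨆ j, (s j).K, Set.infinite_of_injective_forall_mem (f := fun i ↦ q (s i)) ?_ ?_⟩
  · have hne : ∀ i j, i < j → q (s i) ≠ q (s j) := fun i j hij h ↦
      hqJ (s j) (h ▸ (hJanti (Nat.succ_le_of_lt hij)).trans (hJq (s i)))
    intro i j hij
    rcases lt_trichotomy i j with h | h | h
    · exact absurd hij (hne _ _ h)
    · exact h
    · exact absurd hij.symm (hne _ _ h)
  · intro i
    refine mem_associatedPrimes_quotient (hq (s i)) (y := y (s i)) fun r ↦ ?_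
    rw [hmem (i + 1) _ (Submodule.smul_mem _ r (hy (s i)))]
    exact hcolon (s i) r

lemma associatedPrimes_finite_of_support_finite [IsNoetherianRing R]
    (h : (Module.support R M).Finite) : (associatedPrimes R M).Finite := by
  refine (h.image PrimeSpectrum.asIdeal).subset fun p hp ↦ ?_
  obtain ⟨hpp, x, hx⟩ := isAssociatedPrime_iff.mp hp
  refine ⟨⟨p, hpp⟩, Module.mem_support_iff'.mpr ⟨x, fun r hr h0 ↦ hr ?_⟩, rfl⟩
  change r ∈ p
  rw [hx, Submodule.mem_colon_singleton, h0]
  exact Submodule.zero_mem _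

lemma associatedPrimes_quotient_finite [IsNoetherianRing R] {N : Submodule R M} (hN : N.FG)
    (h : (Module.support R (M ⧸ N)).Finite) (K : Submodule R M) :
    (associatedPrimes R (M ⧸ K)).Finite := by
  -- the image `P` of `N` in `M / K`
  set P : Submodule R (M ⧸ K) := N.map K.mkQ
  have : Module.Finite R P := Module.Finite.iff_fg.mpr (hN.map _)
  have hle : N ≤ P.comap K.mkQ := Submodule.le_comap_map _ _
  have hsurj : Function.Surjective (N.mapQ P K.mkQ hle) := by
    intro z
    obtain ⟨z, rfl⟩ := P.mkQ_surjective z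
    obtain ⟨z, rfl⟩ := K.mkQ_surjective z
    exact ⟨N.mkQ z, rfl⟩
  have h1 : (associatedPrimes R ((M ⧸ K) ⧸ P)).Finite :=
    associatedPrimes_finite_of_support_finite
      (h.subset (Module.support_subset_of_surjective _ hsurj))
  exact ((associatedPrimes.finite R P).union h1).subset
    (associatedPrimes.subset_union_of_exact P.injective_subtype (LinearMap.exact_subtype_mkQ P))

end

/-- Over a Noetherian ring `R`, a nonzero `R`-module `M` is weakly Laskerian
(i.e. `Ass (M / N)` is finite for every submodule `N` of `M`) if and only if it is
FSF (i.e. there is a finitely generated submodule `N` of `M` with `Supp (M / N)` finite). -/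
theorem weaklyLaskerian_iff_fsf {R : Type*} [CommRing R] [IsNoetherianRing R]
    {M : Type*} [AddCommGroup M] [Module R M] [Nontrivial M] :
    (∀ N : Submodule R M, (associatedPrimes R (M ⧸ N)).Finite) ↔
      ∃ N : Submodule R M, N.FG ∧ (Module.support R (M ⧸ N)).Finite := by
  constructor
  · intro h
    by_contra! H
    obtain ⟨K, hK⟩ := exists_infinite_associatedPrimes H
    exact hK (h K)
  · rintro ⟨N, hN, h⟩ K
    exact associatedPrimes_quotient_finite hN h K
end

section
/- Let R be a commutative Noetherian ring and M an R-module. Suppose N_0 and N_1 are finitely generated submodules of M such that Supp(M/N_0) ∩ A(R,0) and Supp(M/N_1) ∩ A(R,1) are finite sets. Then, setting N := N_0 + N_1, one has Supp(M/N) ⊆ (Supp(M/N_0) ∩ A(R,0)) ∪ (Supp(M/N_1) ∩ A(R,1)); in particular, Supp(M/N) is a finite set. -/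
/-- In a Noetherian ring, an interval of primes containing one prime strictly between its ends
contains infinitely many. Given finitely many, prime avoidance yields `x ∈ m` outside all of them
and outside `p`; a prime `r ≤ m` minimal over `p + (x)` must be `m`, against Krull's principal
ideal theorem. -/
lemma infinite_Ioo_of_lt_of_lt {R : Type*} [CommRing R] [IsNoetherianRing R]
    {p q m : PrimeSpectrum R} (hpq : p < q) (hqm : q < m) : (Set.Ioo p m).Infinite := by
  intro hfin
  obtain ⟨x, hxm, hx⟩ : ∃ x ∈ m.asIdeal, ∀ r ∈ insert p (Set.Ioo p m), x ∉ r.asIdeal := by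
    by_contra! hcon
    obtain ⟨r, hr, hmr⟩ := (Ideal.subset_union_prime_finite (hfin.insert p)
      (f := fun r : PrimeSpectrum R ↦ r.asIdeal) p p (fun r _ _ _ ↦ r.isPrime)
      (I := m.asIdeal)).mp (fun x hx ↦ by
        obtain ⟨r, hr, hxr⟩ := hcon x hx
        exact Set.mem_biUnion hr hxr)
    have hmr' : m ≤ r := hmr
    rcases hr with rfl | hr
    · exact (hpq.trans hqm).not_ge hmr'
    · exact hr.2.not_ge hmr'
  have hle : Ideal.span (insert x (p.asIdeal : Set R)) ≤ m.asIdeal :=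
    Ideal.span_le.mpr (Set.insert_subset hxm (hpq.trans hqm).le)
  obtain ⟨r, hr, hrm⟩ := Ideal.exists_minimalPrimes_le hle
  have hsub : insert x (p.asIdeal : Set R) ⊆ r := Ideal.span_le.mp hr.1.2
  let r' : PrimeSpectrum R := ⟨r, hr.1.1⟩
  have hxr : x ∈ r'.asIdeal := hsub (Set.mem_insert _ _)
  have hpr : p ≤ r' := fun y hy ↦ hsub (Set.mem_insert_of_mem _ hy)
  have hpr' : p < r' := hpr.lt_of_ne fun h ↦ hx p (Set.mem_insert _ _) (h ▸ hxr)
  have hrm' : r' = m := by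
    by_contra h
    exact hx r' (Set.mem_insert_of_mem _ ⟨hpr', lt_of_le_of_ne hrm h⟩) hxr
  have hrm'' : r = m.asIdeal := congrArg PrimeSpectrum.asIdeal hrm'
  rw [hrm''] at hr
  have hmin := Ideal.mem_minimalPrimes_span_of_mem_minimalPrimes_span_insert
    (q := q.asIdeal) (p := m.asIdeal) hqm x p.asIdeal hr p.asIdeal hpq.le
    (fun y hy ↦ Ideal.le_radical (Ideal.subset_span (Set.mem_insert_of_mem _ hy)))
  rw [Ideal.span_eq] at hmin
  exact hpq.not_ge (hmin.2 ⟨p.isPrime, le_rfl⟩ hpq.le)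

lemma ringKrullDim_quotient_le_one_of_forall {R : Type*} [CommRing R] {p : PrimeSpectrum R}
    (h : ∀ q m : PrimeSpectrum R, p < q → ¬ q < m) : ringKrullDim (R ⧸ p.asIdeal) ≤ 1 := by
  rw [ringKrullDim_quotient, Order.krullDim_le_one_iff]
  intro x
  rcases (show p ≤ x.1 from x.2).eq_or_lt with hx | hx
  · exact Or.inl fun y _ ↦ show x.1 ≤ y.1 from hx ▸ y.2
  · refine Or.inr fun y hxy ↦ ?_
    by_contra hyx
    exact h x.1 y.1 hx (lt_of_le_not_ge hxy hyx)

lemma one_le_ringKrullDim_quotient_of_lt {R : Type*} [CommRing R] {p q : PrimeSpectrum R}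
    (h : p < q) : 1 ≤ ringKrullDim (R ⧸ p.asIdeal) := by
  rw [ringKrullDim_quotient, Order.one_le_krullDim_iff]
  exact ⟨⟨p, fun _ hx ↦ hx⟩, ⟨q, h.le⟩, h⟩

/-- If `V(p)` meets `A(R, 1)` in a finite set, then no chain `p < q < m` of primes exists,
i.e. `dim (R / p) ≤ 1`. By Noetherian induction, every prime strictly between `p` and `m` would
lie in `A(R, 1)`, and there are infinitely many of these. -/
lemma not_lt_of_finite_inter_dimSet {R : Type*} [CommRing R] [IsNoetherianRing R]
    (p : PrimeSpectrum R) (hfin : (Set.Ici p ∩ dimSet R 1).Finite) :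
    ∀ q m : PrimeSpectrum R, p < q → ¬ q < m := by
  have : WellFoundedGT (PrimeSpectrum R) :=
    ⟨InvImage.wf PrimeSpectrum.asIdeal (wellFounded_gt (α := Ideal R))⟩
  induction p using WellFoundedGT.induction with
  | ind p ih =>
    intro q m hpq hqm
    refine infinite_Ioo_of_lt_of_lt hpq hqm (hfin.subset fun r hr ↦ ⟨hr.1.le, ?_⟩)
    have hr' := ih r hr.1 (hfin.subset
      (Set.inter_subset_inter_left _ (Set.Ici_subset_Ici.mpr hr.1.le)))
    exact le_antisymm (by exact_mod_cast ringKrullDim_quotient_le_one_of_forall hr')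
      (by exact_mod_cast one_le_ringKrullDim_quotient_of_lt hr.2)

/-- If `N₀` and `N₁` are finitely generated submodules of `M` with
`Supp (M / N₀) ∩ A(R, 0)` and `Supp (M / N₁) ∩ A(R, 1)` finite, then for `N = N₀ + N₁`
we have `Supp (M / N) ⊆ (Supp (M / N₀) ∩ A(R, 0)) ∪ (Supp (M / N₁) ∩ A(R, 1))`;
in particular `Supp (M / N)` is finite. -/
theorem support_quotient_sup_subset {R : Type*} [CommRing R] [IsNoetherianRing R]
    {M : Type*} [AddCommGroup M] [Module R M]
    (N₀ N₁ : Submodule R M) (hfg₀ : N₀.FG) (hfg₁ : N₁.FG)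
    (h₀ : (Module.support R (M ⧸ N₀) ∩ dimSet R 0).Finite)
    (h₁ : (Module.support R (M ⧸ N₁) ∩ dimSet R 1).Finite) :
    Module.support R (M ⧸ (N₀ ⊔ N₁)) ⊆
        (Module.support R (M ⧸ N₀) ∩ dimSet R 0) ∪
          (Module.support R (M ⧸ N₁) ∩ dimSet R 1) ∧
      (Module.support R (M ⧸ (N₀ ⊔ N₁))).Finite := by
  have hsub : Module.support R (M ⧸ (N₀ ⊔ N₁)) ⊆
      (Module.support R (M ⧸ N₀) ∩ dimSet R 0) ∪
        (Module.support R (M ⧸ N₁) ∩ dimSet R 1) := by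
    intro p hp
    have hp₀ : p ∈ Module.support R (M ⧸ N₀) :=
      Module.support_subset_of_surjective _
        (Submodule.factor_surjective (le_sup_left : N₀ ≤ N₀ ⊔ N₁)) hp
    have hp₁ : p ∈ Module.support R (M ⧸ N₁) :=
      Module.support_subset_of_surjective _
        (Submodule.factor_surjective (le_sup_right : N₁ ≤ N₀ ⊔ N₁)) hp
    have hchain := not_lt_of_finite_inter_dimSet p (h₁.subset
      (Set.inter_subset_inter_left _ fun q hq ↦ Module.mem_support_mono hq hp₁))
    by_cases hmax : ∃ q, p < q
    · obtain ⟨q, hq⟩ := hmax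
      exact Or.inr ⟨hp₁, le_antisymm
        (by exact_mod_cast ringKrullDim_quotient_le_one_of_forall hchain)
        (by exact_mod_cast one_le_ringKrullDim_quotient_of_lt hq)⟩
    · push Not at hmax
      refine Or.inl ⟨hp₀, le_antisymm ?_ ?_⟩
      · rw [ringKrullDim_quotient, Nat.cast_zero, Order.krullDim_nonpos_iff_forall_isMax]
        intro x y hxy
        by_contra hyx
        exact hmax y.1 ((show p ≤ x.1 from x.2).trans_lt (lt_of_le_not_ge hxy hyx))
      · exact_mod_cast ringKrullDim_nonneg_of_nontrivial
  exact ⟨hsub, (h₀.union h₁).subset hsub⟩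
end

section
/- Let R be a commutative Noetherian ring, M an R-module, and N a finitely generated submodule of M such that Supp_R(M/N) is a finite set. Then for every submodule L of M, the set Ass_R(M/L) is finite; that is, M is weakly Laskerian. -/
/-!
Let `K` be the image of `N` in `M / L`. Then `Ass (M / L) ⊆ Ass K ∪ Ass ((M / L) / K)`:
`Ass K` is finite because `K` is finitely generated, and `Ass ((M / L) / K)` is contained in
`Supp ((M / L) / K) ⊆ Supp (M / N)`, as `(M / L) / K` is a quotient of `M / N`.
-/

/-- Associated primes lie in the support, for an arbitrary module over a Noetherian ring. -/
lemma associatedPrimes_subset_image_support (R : Type*) [CommRing R] [IsNoetherianRing R]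
    (Q : Type*) [AddCommGroup Q] [Module R Q] :
    associatedPrimes R Q ⊆ PrimeSpectrum.asIdeal '' Module.support R Q := by
  intro p hp
  obtain ⟨hprime, x, hx⟩ := isAssociatedPrime_iff.mp hp
  refine ⟨⟨p, hprime⟩, Module.mem_support_iff'.mpr ⟨x, fun r hr h0 => hr ?_⟩, rfl⟩
  change r ∈ p
  rw [hx, Submodule.mem_colon_singleton, h0]
  exact Submodule.zero_mem _

/-- If `N` is a finitely generated submodule of `M` over a Noetherian ring `R` such that
`Supp (M / N)` is finite, then `Ass (M / L)` is finite for every submodule `L` of `M`;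
that is, `M` is weakly Laskerian. -/
theorem weaklyLaskerian_of_fsf {R : Type*} [CommRing R] [IsNoetherianRing R]
    {M : Type*} [AddCommGroup M] [Module R M]
    (N : Submodule R M) (hfg : N.FG) (hfin : (Module.support R (M ⧸ N)).Finite) :
    ∀ L : Submodule R M, (associatedPrimes R (M ⧸ L)).Finite := by
  intro L
  let K : Submodule R (M ⧸ L) := N.map L.mkQ
  have : Module.Finite R K := Module.Finite.iff_fg.mpr (hfg.map L.mkQ)
  have hsurj : Function.Surjective (N.mapQ K L.mkQ (Submodule.le_comap_map L.mkQ N)) := by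
    intro y
    obtain ⟨z, rfl⟩ := K.mkQ_surjective y
    obtain ⟨m, rfl⟩ := L.mkQ_surjective z
    exact ⟨N.mkQ m, rfl⟩
  have hquot : (associatedPrimes R ((M ⧸ L) ⧸ K)).Finite :=
    ((hfin.subset (Module.support_subset_of_surjective _ hsurj)).image _).subset
      (associatedPrimes_subset_image_support R _)
  exact ((associatedPrimes.finite R K).union hquot).subset
    (associatedPrimes.subset_union_of_exact K.injective_subtype (LinearMap.exact_subtype_mkQ K))
end

section
/- Let (R, m) be a commutative Noetherian local ring and M a weakly Laskerian R-module. Then M ⊗_R R* is a weakly Laskerian R*-module, where R* denotes the m-adic completion of R. -/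
/-!
The proof rests on a structure theorem: a weakly Laskerian module `M` over a Noetherian ring has a
finitely generated submodule `N` such that `M ⧸ N` has finite support
(`exists_fg_quotSupport_finite`). Supports of quotients of `M` are closed because their sets of
associated primes are finite, so a finitely generated `N` can be chosen with the support of `M ⧸ N`
minimal; its primes then lie in the support of `M ⧸ N'` for every finitely generated `N'`. If it were
infinite, it would contain a sequence of primes `p j`, none containing an earlier one. From these an
increasing chain of finitely generated submodules is built, each step making `p j` the annihilator of
a new class; Krull's intersection theorem makes it possible not to disturb the earlier annihilators.
The quotient by the union of the chain has infinitely many associated primes, a contradiction.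

Let `S` be the completion. It is Noetherian, being a quotient of a power series ring over `R`, and it
is local with maximal ideal generated by that of `R`. For a submodule `L` of `S ⊗ M`, the associated
primes of `(S ⊗ M) ⧸ L` are among those of the image of `S ⊗ N`, which is finitely generated, and
those of a quotient of `S ⊗ (M ⧸ N)`, which lie over the finite support of `M ⧸ N`. Each prime in that
support is contained in finitely many primes of `R`, and Krull's principal ideal theorem shows that
its extension to `S` is contained in finitely many primes of `S` (`finite_primes_over_map`).
-/

open TensorProduct IsLocalRing

/-! ### The completion is Noetherian -/

/-- A surjection `P → R` carrying a finitely generated ideal `J` onto `I` induces a surjection on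
adic completions. -/
theorem AdicCompletion.exists_surjective_of_map_eq {P R : Type*} [CommRing P] [CommRing R]
    (J : Ideal P) (I : Ideal R) (hJ : J.FG) (g : P →+* R) (hg : Function.Surjective g)
    (hJI : J.map g = I) :
    ∃ F : AdicCompletion J P →+* AdicCompletion I R, Function.Surjective F := by
  have hI : I.FG := hJI ▸ hJ.map g
  have hle : ∀ n, J ^ n ≤ (I ^ n).comap g := fun n => by
    rw [← Ideal.map_le_iff_le_comap, Ideal.map_pow, hJI]
  let f : (n : ℕ) → AdicCompletion J P →+* R ⧸ I ^ n := fun n =>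
    (Ideal.quotientMap (I ^ n) g (hle n)).comp (AdicCompletion.evalₐ J n : _ →+* _)
  have hf : ∀ {m n : ℕ} (h : m ≤ n), (Ideal.Quotient.factorPow I h).comp (f n) = f m := by
    intro m n h
    ext x
    obtain ⟨x, rfl⟩ := AdicCompletion.mk_surjective J P x
    simp only [f, RingHom.comp_apply, RingHom.coe_coe, AdicCompletion.evalₐ_mk,
      Ideal.quotientMap_mk]
    have h1 := AdicCompletion.Ideal.mk_eq_mk J h x
    rw [Ideal.Quotient.eq] at h1
    simp only [Ideal.Quotient.factorPow, Ideal.Quotient.factor_mk]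
    rw [Ideal.Quotient.eq, ← map_sub]
    exact hle m h1
  let F := AdicCompletion.liftRingHom I f hf
  have hF : F.comp (algebraMap P (AdicCompletion J P)) =
      (algebraMap R (AdicCompletion I R)).comp g := by
    ext p : 1
    refine AdicCompletion.ext_evalₐ fun n => ?_
    simp [F, f]
  have hmap : (J.map (algebraMap P (AdicCompletion J P))).map F =
      I.map (algebraMap R (AdicCompletion I R)) := by
    rw [Ideal.map_map, hF, ← Ideal.map_map, hJI]
  have := AdicCompletion.isAdicComplete_self J hJ
  have hc := AdicCompletion.isAdicComplete_self I hI
  have : IsHausdorff ((J.map (algebraMap P (AdicCompletion J P))).map F)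
      (AdicCompletion I R) := by rw [hmap]; infer_instance
  refine ⟨F, surjective_of_mk_map_comp_surjective
    (I := J.map (algebraMap P (AdicCompletion J P))) F fun y => ?_⟩
  obtain ⟨y, rfl⟩ := Ideal.Quotient.mk_surjective y
  obtain ⟨r, hr⟩ := Ideal.Quotient.mk_surjective (AdicCompletion.evalOneₐ I y)
  obtain ⟨p, rfl⟩ := hg r
  refine ⟨algebraMap _ _ p, ?_⟩
  rw [RingHom.comp_apply, Ideal.Quotient.eq, hmap, ← AdicCompletion.ker_evalOneₐ_eq_map I hI]
  have h2 := RingHom.congr_fun hF p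
  simp only [RingHom.comp_apply] at h2
  rw [h2, RingHom.mem_ker, map_sub, sub_eq_zero]
  refine Eq.trans ?_ hr
  exact RingHom.congr_fun (AdicCompletion.evalOneₐ_comp_algebraMap_eq_mk I) (g p)

/-- The completion of a Noetherian ring at an ideal with `n` generators is a quotient of a power
series ring in `n` variables. -/
theorem AdicCompletion.isNoetherianRing_of_isNoetherianRing {R : Type*} [CommRing R]
    [IsNoetherianRing R] (I : Ideal R) : IsNoetherianRing (AdicCompletion I R) := by
  obtain ⟨n, a, ha⟩ := Submodule.fg_iff_exists_fin_generating_family.mp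
    (IsNoetherian.noetherian I)
  obtain ⟨F, hF⟩ := AdicCompletion.exists_surjective_of_map_eq
    (MvPolynomial.idealOfVars (Fin n) R) I (MvPolynomial.idealOfVars_fg _ _)
    (MvPolynomial.aeval a : MvPolynomial (Fin n) R →ₐ[R] R).toRingHom
    (fun r => ⟨MvPolynomial.C r, by simp⟩)
    (by
      rw [MvPolynomial.idealOfVars, Ideal.map_span, ← Set.range_comp, ← ha]
      congr 2; ext; simp)
  have : IsNoetherianRing (AdicCompletion (MvPolynomial.idealOfVars (Fin n) R)
      (MvPolynomial (Fin n) R)) :=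
    isNoetherianRing_of_ringEquiv _ (MvPowerSeries.toAdicCompletionAlgEquiv (Fin n) R).toRingEquiv
  exact isNoetherianRing_of_surjective _ _ F hF

/-! ### Sequences in posets with the ascending chain condition -/

/-- In a poset with the ascending chain condition, an infinite set contains a sequence none of
whose terms lies above an earlier one. If some `q ∈ X` has infinitely many elements of `X` above it,
choose `q` maximal with this property and restrict to the elements strictly above `q`; in all cases
there is an infinite set in which every element has only finitely many elements above it. -/
theorem exists_seq_not_le {α : Type*} [PartialOrder α] [WellFoundedGT α] {X : Set α}
    (hX : X.Infinite) :
    ∃ p : ℕ → α, (∀ j, p j ∈ X) ∧ ∀ k j, k < j → ¬ p k ≤ p j := by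
  obtain ⟨Y, hYX, hY, hfin⟩ : ∃ Y ⊆ X, Y.Infinite ∧ ∀ q ∈ Y, {q' ∈ Y | q ≤ q'}.Finite := by
    by_cases h : ∀ q ∈ X, {q' ∈ X | q ≤ q'}.Finite
    · exact ⟨X, subset_rfl, hX, h⟩
    push Not at h
    obtain ⟨q, ⟨hq, hqinf⟩, hmax⟩ := WellFounded.has_min (wellFounded_gt (α := α))
      {q | q ∈ X ∧ {q' ∈ X | q ≤ q'}.Infinite} h
    refine ⟨{q' ∈ X | q < q'}, fun _ h => h.1, ?_, ?_⟩
    · refine (hqinf.sdiff (Set.finite_singleton q)).mono ?_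
      rintro a ⟨⟨h1, h2⟩, h3⟩
      exact ⟨h1, lt_of_le_of_ne h2 (Ne.symm h3)⟩
    · rintro a ⟨h1, h2⟩
      by_contra hc
      refine hmax a ⟨h1, fun hf => hc (hf.subset ?_)⟩ h2
      rintro b ⟨⟨h3, -⟩, h4⟩
      exact ⟨h3, h4⟩
  obtain ⟨f, hf, hr⟩ := exists_seq_of_forall_finset_exists (· ∈ Y) (fun a b => ¬ a ≤ b) (by
    intro s hs
    have : (⋃ a ∈ s, {q' ∈ Y | a ≤ q'}).Finite :=
      s.finite_toSet.biUnion fun a ha => hfin a (hs a ha)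
    obtain ⟨y, hy, hy'⟩ := hY.exists_notMem_finite this
    refine ⟨y, hy, fun x hx hxy => hy' ?_⟩
    simp only [Set.mem_iUnion]
    exact ⟨x, hx, hy, hxy⟩)
  exact ⟨f, fun j => hYX (hf j), fun k j => hr k j⟩

/-! ### Weakly Laskerian modules are finitely generated up to finite support -/

section

variable {R : Type*} [CommRing R] {M : Type*} [AddCommGroup M] [Module R M]

/-- The support of `M ⧸ N`, as a set of prime ideals of `R`, described by the condition that some
class in `M ⧸ N` has annihilator `N.colon {y}` inside `p`. -/
def quotSupport (N : Submodule R M) : Set (Ideal R) :=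
  {p | p.IsPrime ∧ ∃ y, N.colon {y} ≤ p}

theorem quotSupport_anti {N N' : Submodule R M} (h : N ≤ N') :
    quotSupport N' ⊆ quotSupport N := by
  rintro p ⟨hp, y, hy⟩
  exact ⟨hp, y, (Submodule.colon_mono h subset_rfl).trans hy⟩

variable [IsNoetherianRing R]

theorem mem_associatedPrimes_quotient_iff {N : Submodule R M} {p : Ideal R} :
    p ∈ associatedPrimes R (M ⧸ N) ↔ p.IsPrime ∧ ∃ x, N.colon {x} = p := by
  rw [AssociatedPrimes.mem_iff, isAssociatedPrime_iff]
  have key : ∀ x, (⊥ : Submodule R (M ⧸ N)).colon {N.mkQ x} = N.colon {x} := fun x => by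
    ext r
    rw [Submodule.mem_colon_singleton, Submodule.mem_colon_singleton, Submodule.mem_bot,
      ← map_smul, Submodule.mkQ_apply, Submodule.Quotient.mk_eq_zero]
  refine and_congr_right fun _ => ⟨?_, ?_⟩
  · rintro ⟨x, rfl⟩
    obtain ⟨x, rfl⟩ := N.mkQ_surjective x
    exact ⟨x, (key x).symm⟩
  · rintro ⟨x, rfl⟩
    exact ⟨_, (key x).symm⟩

theorem exists_associatedPrime_le {N : Submodule R M} {p : Ideal R} (hp : p ∈ quotSupport N) :
    ∃ q ∈ associatedPrimes R (M ⧸ N), q ≤ p := by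
  obtain ⟨hp, y, hy⟩ := hp
  obtain ⟨q, hq, hqp⟩ := Ideal.exists_minimalPrimes_le hy
  obtain ⟨z, hz⟩ := Submodule.exists_eq_colon_of_mem_minimalPrimes hq
  exact ⟨q, mem_associatedPrimes_quotient_iff.mpr ⟨hq.1.1, z, hz.symm⟩, hqp⟩

/-- If `M ⧸ N` has finitely many associated primes, then its support is the closed set defined by
their intersection. -/
theorem mem_quotSupport_iff {N : Submodule R M} (hN : (associatedPrimes R (M ⧸ N)).Finite)
    {p : Ideal R} :
    p ∈ quotSupport N ↔ p.IsPrime ∧ sInf (associatedPrimes R (M ⧸ N)) ≤ p := by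
  constructor
  · intro h
    obtain ⟨q, hq, hqp⟩ := exists_associatedPrime_le h
    exact ⟨h.1, (sInf_le hq).trans hqp⟩
  · rintro ⟨hp, h⟩
    have h' : hN.toFinset.inf id ≤ p := by
      rwa [Finset.inf_id_eq_sInf, hN.coe_toFinset]
    obtain ⟨q, hq, hqp⟩ := (Ideal.IsPrime.inf_le' hp).mp h'
    obtain ⟨-, x, hx⟩ := mem_associatedPrimes_quotient_iff.mp (hN.mem_toFinset.mp hq)
    exact ⟨hp, x, hx.trans_le hqp⟩

/-- Krull's intersection theorem for the submodule of `(M ⧸ N)_p` generated by `x` and `y`: since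
the class of `x` is nonzero at `p`, it remains so modulo a high power of `p`. -/
theorem exists_colon_sup_pow_smul_le (N : Submodule R M) {p : Ideal R} [p.IsPrime] {x : M} (y : M)
    (hx : N.colon {x} ≤ p) :
    ∃ n : ℕ, (N ⊔ p ^ n • Submodule.span R {x, y}).colon {x} ≤ p := by
  let F : Submodule R M := Submodule.span R {x, y}
  let G : Submodule R (M ⧸ N) := F.map N.mkQ
  have : Module.Finite R G := Module.Finite.iff_fg.mpr
    ((Submodule.fg_span (Set.toFinite _)).map _)
  let A := Localization.AtPrime p
  let L := LocalizedModule p.primeCompl G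
  let φ : G →ₗ[R] L := LocalizedModule.mkLinearMap p.primeCompl G
  have hxF : x ∈ F := Submodule.subset_span (by simp)
  let x' : G := ⟨N.mkQ x, Submodule.mem_map_of_mem hxF⟩
  have hx' : φ x' ≠ 0 := by
    intro h
    rw [IsLocalizedModule.eq_zero_iff p.primeCompl φ] at h
    obtain ⟨c, hc⟩ := h
    refine c.2 (hx ?_)
    rw [Submodule.mem_colon_singleton]
    have := congrArg Subtype.val hc
    change c.1 • N.mkQ x = 0 at this
    rwa [← map_smul, Submodule.mkQ_apply, Submodule.Quotient.mk_eq_zero] at this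
  have hfin : Module.Finite A L := inferInstance
  have hK := Ideal.iInf_pow_smul_eq_bot_of_isLocalRing (M := L) (maximalIdeal A)
    (IsLocalRing.maximalIdeal.isMaximal A).ne_top
  have : ∃ n : ℕ, φ x' ∉ (maximalIdeal A ^ n • ⊤ : Submodule A L) := by
    by_contra! hc
    refine hx' ?_
    rw [← Submodule.mem_bot A, ← hK, Submodule.mem_iInf]
    exact hc
  obtain ⟨n, hn⟩ := this
  refine ⟨n, fun s hs => ?_⟩
  by_contra hsp
  apply hn
  rw [Submodule.mem_colon_singleton] at hs
  have h1 : s • x' ∈ (p ^ n • ⊤ : Submodule R G) := by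
    have h2 : N.mkQ (s • x) ∈ p ^ n • G := by
      rw [← Submodule.map_smul'']
      obtain ⟨a, ha, b, hb, hab⟩ := Submodule.mem_sup.mp hs
      refine ⟨b, hb, ?_⟩
      rw [← hab, map_add, Submodule.mkQ_apply N a, (Submodule.Quotient.mk_eq_zero N).mpr ha,
        zero_add]
    have h3 : (p ^ n • ⊤ : Submodule R G).map G.subtype = p ^ n • G := by
      rw [Submodule.map_smul'', Submodule.map_top, Submodule.range_subtype]
    rw [← h3] at h2
    obtain ⟨w, hw, hwx⟩ := h2
    have : w = s • x' := Subtype.ext (by rw [← Submodule.subtype_apply, hwx]; simp [x'])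
    rwa [← this]
  have h4 : φ (s • x') ∈ (maximalIdeal A ^ n • ⊤ : Submodule A L) := by
    refine Submodule.smul_induction_on (p := fun w => φ w ∈ (maximalIdeal A ^ n • ⊤ : Submodule A L))
      h1 ?_ ?_
    · intro r hr m _
      rw [map_smul, ← algebraMap_smul A r]
      refine Submodule.smul_mem_smul ?_ trivial
      rw [← Localization.AtPrime.map_eq_maximalIdeal, ← Ideal.map_pow]
      exact Ideal.mem_map_of_mem _ hr
    · intro a b ha hb
      rw [map_add]
      exact add_mem ha hb
  rw [map_smul, ← algebraMap_smul A s] at h4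
  exact (Submodule.smul_mem_iff_of_isUnit _
    (IsLocalization.map_units A (⟨s, hsp⟩ : p.primeCompl))).mp h4

/-- The inductive step: `N` can be enlarged so that one further prime `p j` becomes the annihilator
of a class `z`, while the classes `x k` for `k < j` keep their annihilators `p k`. -/
theorem exists_enlarge_s7 {p : ℕ → Ideal R} (hp : ∀ j, (p j).IsPrime)
    (hle : ∀ k j, k < j → ¬ p k ≤ p j) (j : ℕ) (N : Submodule R M) (hN : N.FG)
    (hsupp : p j ∈ quotSupport N) (x : ℕ → M) (hx : ∀ k < j, N.colon {x k} = p k) :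
    ∃ N' : Submodule R M, ∃ z : M, N'.FG ∧ N ≤ N' ∧ (∀ k < j, N'.colon {x k} = p k) ∧
      N'.colon {z} = p j := by
  obtain ⟨-, y, hy⟩ := hsupp
  have hn : ∀ k, ∃ n : ℕ, k < j →
      (N ⊔ p k ^ n • Submodule.span R {x k, y}).colon {x k} ≤ p k := fun k => by
    by_cases hk : k < j
    · have := hp k
      obtain ⟨n, hn⟩ := exists_colon_sup_pow_smul_le N y (hx k hk).le
      exact ⟨n, fun _ => hn⟩
    · exact ⟨0, fun h => absurd h hk⟩
  choose n hn using hn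
  -- Take `z = s • y` with `s ∉ p j` lying in a high power of each earlier `p k`, and add `p j • z`.
  have hprod : ¬ ∏ k ∈ Finset.range j, p k ^ n k ≤ p j := by
    rw [Ideal.IsPrime.prod_le (hp j)]
    rintro ⟨k, hk, hkj⟩
    exact hle k j (Finset.mem_range.mp hk) ((hp j).le_of_pow_le hkj)
  obtain ⟨s, hs, hsj⟩ := SetLike.not_le_iff_exists.mp hprod
  refine ⟨N ⊔ p j • Submodule.span R {s • y}, s • y, ?_, le_sup_left, ?_, ?_⟩
  · exact hN.sup (Submodule.FG.smul (IsNoetherian.noetherian (p j)) (Submodule.fg_span_singleton _))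
  · intro k hk
    refine le_antisymm (le_trans (Submodule.colon_mono ?_ subset_rfl) (hn k hk))
      ((hx k hk).ge.trans (Submodule.colon_mono le_sup_left subset_rfl))
    refine sup_le_sup_left (Submodule.smul_le_right.trans ?_) N
    rw [Submodule.span_singleton_le_iff_mem]
    refine Submodule.smul_mem_smul ?_ (Submodule.subset_span (by simp))
    exact (Ideal.prod_le_inf.trans (Finset.inf_le (Finset.mem_range.mpr hk))) hs
  · refine le_antisymm (fun r hr => ?_) fun r hr => ?_
    · rw [Submodule.mem_colon_singleton] at hr
      obtain ⟨a, ha, b, hb, hab⟩ := Submodule.mem_sup.mp hr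
      obtain ⟨c, hc, rfl⟩ := Submodule.mem_smul_span_singleton.mp hb
      have h1 : (r - c) * s ∈ p j := hy (by
        rw [Submodule.mem_colon_singleton, mul_smul, sub_smul, ← hab, add_sub_cancel_right]
        exact ha)
      have h2 := ((hp j).mem_or_mem h1).resolve_right hsj
      simpa using (p j).add_mem h2 hc
    · rw [Submodule.mem_colon_singleton]
      exact Submodule.mem_sup_right
        (Submodule.smul_mem_smul hr (Submodule.mem_span_singleton_self _))

/-- If the primes `p j`, none containing an earlier one, lie in the support of `M ⧸ N` for every
finitely generated `N`, then the union of the chain built with `exists_enlarge` is a submodule whose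
quotient has all `p j` as associated primes. -/
theorem exists_infinite_associatedPrimes_s7 {p : ℕ → Ideal R}
    (hle : ∀ k j, k < j → ¬ p k ≤ p j)
    (hsupp : ∀ j, ∀ N : Submodule R M, N.FG → p j ∈ quotSupport N) :
    ∃ N : Submodule R M, (associatedPrimes R (M ⧸ N)).Infinite := by
  have hp : ∀ j, (p j).IsPrime := fun j => (hsupp j ⊥ Submodule.fg_bot).1
  -- The stage-`j` data: a finitely generated submodule, and vectors of which the first `j` matter.
  let Inv : ℕ → Submodule R M × (ℕ → M) → Prop := fun j s =>
    s.1.FG ∧ ∀ k < j, s.1.colon {s.2 k} = p k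
  have step : ∀ j, ∀ s : {s // Inv j s}, ∃ s' : {s // Inv (j + 1) s},
      s.1.1 ≤ s'.1.1 ∧ ∀ k < j, s'.1.2 k = s.1.2 k := by
    rintro j ⟨⟨N, x⟩, hN, hx⟩
    obtain ⟨N', z, hN', hNN', hx', hz⟩ := exists_enlarge_s7 hp hle j N hN (hsupp j N hN) x hx
    refine ⟨⟨⟨N', Function.update x j z⟩, hN', fun k hk => ?_⟩, hNN', fun k hk => ?_⟩
    · rcases Nat.lt_succ_iff_lt_or_eq.mp hk with hk | rfl
      · simpa [Function.update_of_ne hk.ne] using hx' k hk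
      · simpa using hz
    · simp [Function.update_of_ne hk.ne]
  choose f hf1 hf2 using step
  let S : ∀ j, {s // Inv j s} := fun j =>
    Nat.rec ⟨(⊥, 0), Submodule.fg_bot, fun k hk => absurd hk (Nat.not_lt_zero k)⟩ (fun j s => f j s) j
  have hmono : Monotone fun j => (S j).1.1 := monotone_nat_of_le_succ fun j => hf1 j (S j)
  let x : ℕ → M := fun k => (S (k + 1)).1.2 k
  have hxS : ∀ k j, k + 1 ≤ j → (S j).1.2 k = x k := by
    intro k j hj
    induction j, hj using Nat.le_induction with
    | base => rfl
    | succ j hj ih => exact (hf2 j (S j) k hj).trans ih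
  have hcolon : ∀ k j, k + 1 ≤ j → (S j).1.1.colon {x k} = p k := fun k j hj => by
    rw [← hxS k j hj]
    exact (S j).2.2 k hj
  refine ⟨⨆ j, (S j).1.1, Set.infinite_of_injective_forall_mem (f := p) ?_ fun k => ?_⟩
  · intro a b hab
    rcases lt_trichotomy a b with h | h | h
    · exact absurd hab.le (hle a b h)
    · exact h
    · exact absurd hab.ge (hle b a h)
  · refine mem_associatedPrimes_quotient_iff.mpr ⟨hp k, x k, le_antisymm (fun r hr => ?_) ?_⟩
    · rw [Submodule.mem_colon_singleton, Submodule.mem_iSup_of_directed _ hmono.directed_le] at hr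
      obtain ⟨j, hj⟩ := hr
      rw [← hcolon k (max j (k + 1)) (le_max_right _ _), Submodule.mem_colon_singleton]
      exact hmono (le_max_left _ _) hj
    · rw [← hcolon k (k + 1) le_rfl]
      exact Submodule.colon_mono (le_iSup (fun j => (S j).1.1) (k + 1)) subset_rfl

/-- A weakly Laskerian module over a Noetherian ring has a finitely generated submodule whose
quotient has finite support. -/
theorem exists_fg_quotSupport_finite
    (hwl : ∀ N : Submodule R M, (associatedPrimes R (M ⧸ N)).Finite) :
    ∃ N : Submodule R M, N.FG ∧ (quotSupport N).Finite := by
  obtain ⟨-, ⟨N, hN, rfl⟩, hmax⟩ := WellFounded.has_min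
    (wellFounded_gt (α := Ideal R))
    ((fun N : Submodule R M => sInf (associatedPrimes R (M ⧸ N))) '' {N | N.FG})
    ⟨_, ⊥, Submodule.fg_bot, rfl⟩
  refine ⟨N, hN, ?_⟩
  -- `N` is chosen with the support of `M ⧸ N` minimal, so enlarging `N` does not shrink the support.
  have hmin : ∀ N' : Submodule R M, N'.FG → quotSupport N ⊆ quotSupport N' := by
    intro N' hN'
    refine Set.Subset.trans ?_ (quotSupport_anti (le_sup_right : N' ≤ N ⊔ N'))
    have h1 : sInf (associatedPrimes R (M ⧸ N)) ≤ sInf (associatedPrimes R (M ⧸ (N ⊔ N'))) := by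
      refine le_sInf fun q hq => ?_
      obtain ⟨hq', x, hx⟩ := mem_associatedPrimes_quotient_iff.mp hq
      exact ((mem_quotSupport_iff (hwl N)).mp
        (quotSupport_anti (le_sup_left : N ≤ N ⊔ N') ⟨hq', x, hx.le⟩)).2
    have h2 := eq_of_le_of_not_lt h1 (hmax _ ⟨N ⊔ N', hN.sup hN', rfl⟩)
    intro q hq
    rw [mem_quotSupport_iff (hwl _)] at hq ⊢
    exact ⟨hq.1, h2 ▸ hq.2⟩
  by_contra hinf
  obtain ⟨p, hp, hle⟩ := exists_seq_not_le hinf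
  obtain ⟨N', hN'⟩ := exists_infinite_associatedPrimes_s7 hle fun j N' hN' => hmin N' hN' (hp j)
  exact hN' (hwl N')

end

/-! ### Base change -/

/-- If only finitely many primes of `R` contain `p`, then the same holds for `pS`. Prime avoidance
gives an element `a` of the maximal ideal of `R` lying in no nonmaximal prime over `p`; then the
maximal ideal of `S` is minimal over `pS + aS`, and by Krull's principal ideal theorem every other
prime over `pS` is minimal over `pS`. -/
theorem finite_primes_over_map {R S : Type*} [CommRing R] [IsLocalRing R] [CommRing S]
    [IsNoetherianRing S] [IsLocalRing S] [Algebra R S]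
    (hS : maximalIdeal S = (maximalIdeal R).map (algebraMap R S)) {p : Ideal R}
    (hp : p.IsPrime) (hfin : {q : Ideal R | q.IsPrime ∧ p ≤ q}.Finite) :
    {Q : Ideal S | Q.IsPrime ∧ p.map (algebraMap R S) ≤ Q}.Finite := by
  let T : Set (Ideal R) := {q | (q.IsPrime ∧ p ≤ q) ∧ q ≠ maximalIdeal R}
  have hT : T.Finite := hfin.subset fun q hq => hq.1
  obtain ⟨a, ham, haT⟩ : ∃ a ∈ maximalIdeal R, ∀ q ∈ T, a ∉ q := by
    by_contra! hc
    have : (maximalIdeal R : Set R) ⊆ ⋃ q ∈ T, (id q : Ideal R) := fun a ha => by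
      obtain ⟨q, hq, haq⟩ := hc a ha
      simp only [Set.mem_iUnion]
      exact ⟨q, hq, haq⟩
    obtain ⟨q, hq, hmq⟩ := (Ideal.subset_union_prime_finite hT ⊥ ⊥
      (fun q hq _ _ => hq.1.1)).mp this
    exact hq.2 (le_antisymm (le_maximalIdeal hq.1.1.ne_top) hmq)
  let t : Set S := algebraMap R S '' p
  have hmin : maximalIdeal S ∈ (Ideal.span (insert (algebraMap R S a) t)).minimalPrimes := by
    refine ⟨⟨inferInstance, ?_⟩, ?_⟩
    · rw [Ideal.span_le, Set.insert_subset_iff, hS]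
      refine ⟨Ideal.mem_map_of_mem _ ham, ?_⟩
      rintro _ ⟨r, hr, rfl⟩
      exact Ideal.mem_map_of_mem _ (le_maximalIdeal hp.ne_top hr)
    · rintro Q ⟨hQ, hQle⟩ -
      rw [Ideal.span_le, Set.insert_subset_iff] at hQle
      rw [hS, Ideal.map_le_iff_le_comap]
      by_contra hc
      exact haT (Q.comap (algebraMap R S))
        ⟨⟨hQ.comap _, fun r hr => hQle.2 ⟨r, hr, rfl⟩⟩, fun h => hc h.ge⟩ hQle.1
  refine ((Set.finite_singleton (maximalIdeal S)).union
    (Ideal.finite_minimalPrimes_of_isNoetherianRing S (Ideal.span t))).subset ?_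
  rintro Q ⟨hQ, hpQ⟩
  by_cases h : Q = maximalIdeal S
  · exact Or.inl h
  · exact Or.inr (Ideal.mem_minimalPrimes_span_of_mem_minimalPrimes_span_insert
      (lt_of_le_of_ne (le_maximalIdeal hQ.ne_top) h) _ t hmin t
      (Ideal.span_le.mp hpQ) (Ideal.subset_span.trans
        ((Ideal.span_mono (Set.subset_insert _ _)).trans Ideal.le_radical)))

/-- Base change of a weakly Laskerian module to any Noetherian local `R`-algebra whose maximal ideal
is generated by that of `R`. -/
theorem associatedPrimes_baseChange_quotient_finite {R S : Type*}
    [CommRing R] [IsNoetherianRing R] [IsLocalRing R]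
    [CommRing S] [IsNoetherianRing S] [IsLocalRing S] [Algebra R S]
    (hS : maximalIdeal S = (maximalIdeal R).map (algebraMap R S))
    {M : Type*} [AddCommGroup M] [Module R M]
    (hwl : ∀ N : Submodule R M, (associatedPrimes R (M ⧸ N)).Finite)
    (L : Submodule S (S ⊗[R] M)) : (associatedPrimes S ((S ⊗[R] M) ⧸ L)).Finite := by
  obtain ⟨N, hN, hfin⟩ := exists_fg_quotSupport_finite hwl
  let K : Submodule S ((S ⊗[R] M) ⧸ L) := (N.baseChange S).map L.mkQ
  have hNS : (N.baseChange S).FG := by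
    obtain ⟨s, rfl⟩ := hN
    rw [Submodule.baseChange_span]
    exact Submodule.fg_span (s.finite_toSet.image _)
  have hK : Module.Finite S K := Module.Finite.iff_fg.mpr (hNS.map _)
  refine ((associatedPrimes.finite S K).union ?_).subset
    (associatedPrimes.subset_union_of_exact (f := K.subtype) (g := K.mkQ)
      K.injective_subtype (LinearMap.exact_subtype_mkQ K))
  refine (hfin.biUnion fun p hp => finite_primes_over_map (S := S) hS hp.1 (hfin.subset
    (fun q (hq : q.IsPrime ∧ p ≤ q) => ⟨hq.1, hp.2.imp fun y hy => hy.trans hq.2⟩))).subset ?_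
  intro Q hQ
  obtain ⟨hQ, z, hz⟩ := mem_associatedPrimes_quotient_iff.mp hQ
  simp only [Set.mem_iUnion]
  refine ⟨Q.comap (algebraMap R S), ⟨hQ.comap _, ?_⟩, hQ, Ideal.map_comap_le⟩
  by_contra! hc
  -- Otherwise `M ⧸ N` vanishes at `Q ∩ R`, so every tensor is carried into the image of `S ⊗ N`
  -- by an element of `R` outside `Q`.
  have key : ∀ w : S ⊗[R] M, ∃ r : R, algebraMap R S r ∉ Q ∧
      algebraMap R S r • w ∈ N.baseChange S := by
    intro w
    induction w using TensorProduct.induction_on with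
    | zero => exact ⟨1, by simpa using (Ideal.ne_top_iff_one Q).mp hQ.ne_top, by simp⟩
    | tmul s m =>
      obtain ⟨r, hr, hrQ⟩ := SetLike.not_le_iff_exists.mp (hc m)
      refine ⟨r, hrQ, ?_⟩
      rw [algebraMap_smul, ← TensorProduct.tmul_smul]
      exact Submodule.tmul_mem_baseChange_of_mem s (Submodule.mem_colon_singleton.mp hr)
    | add a b ha hb =>
      obtain ⟨r, hr, hra⟩ := ha
      obtain ⟨r', hr', hrb⟩ := hb
      refine ⟨r * r', fun h => ?_, ?_⟩
      · rw [map_mul] at h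
        exact (hQ.mem_or_mem h).elim hr hr'
      · rw [map_mul, smul_add]
        refine add_mem ?_ ?_
        · rw [mul_comm, mul_smul]
          exact Submodule.smul_mem _ _ hra
        · rw [mul_smul]
          exact Submodule.smul_mem _ _ hrb
  obtain ⟨w, rfl⟩ := L.mkQ_surjective z
  obtain ⟨r, hrQ, hrw⟩ := key w
  refine hrQ (hz.le ?_)
  rw [Submodule.mem_colon_singleton, ← map_smul]
  exact Submodule.mem_map_of_mem hrw

/-- If `(R, m)` is a Noetherian local ring and `M` a weakly Laskerian `R`-module, then
`M ⊗[R] R*` is a weakly Laskerian module over the `m`-adic completion `R*` of `R`. -/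
theorem weaklyLaskerian_tensor_completion {R : Type*} [CommRing R] [IsNoetherianRing R]
    [IsLocalRing R] {M : Type*} [AddCommGroup M] [Module R M]
    (hwl : ∀ N : Submodule R M, (associatedPrimes R (M ⧸ N)).Finite) :
    ∀ N : Submodule (AdicCompletion (maximalIdeal R) R)
        (AdicCompletion (maximalIdeal R) R ⊗[R] M),
      (associatedPrimes (AdicCompletion (maximalIdeal R) R)
        ((AdicCompletion (maximalIdeal R) R ⊗[R] M) ⧸ N)).Finite := by
  have := AdicCompletion.isNoetherianRing_of_isNoetherianRing (maximalIdeal R)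
  exact associatedPrimes_baseChange_quotient_finite AdicCompletion.maximalIdeal_eq_map hwl
end

section
/- Let (R, m) → (S, n) be a local homomorphism of commutative Noetherian local rings such that S is finitely generated as an R-module. Then every weakly Laskerian S-module is a weakly Laskerian R-module (via restriction of scalars). -/
/-!
Write `Ass` for sets of associated primes. Suppose `N` is an `R`-submodule of `M` with
`Ass_R (M ⧸ N)` infinite. Since `R` is Noetherian and local, heights of its primes are bounded, so
infinitely many of these primes have the same height; they form an infinite antichain `A`
(`exists_infinite_antichain`). A Zorn argument enlarges `N` to an `R`-submodule `N'` with
`Ass_R (M ⧸ N') = A` (`exists_associatedPrimes_quotient_eq`).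

Let `N''` be the largest `S`-submodule of `M` contained in `N'`. For `p ∈ A`, say `p` is the
annihilator of the class of `x` in `M ⧸ N'`, the cyclic `S`-module `Y` generated by `x` in `M ⧸ N''`
is finite over `R`, and multiplication by finitely many `R`-module generators of `S` embeds it in a
finite power of `M ⧸ N'`. Hence `Ass_R Y ⊆ A`. A minimal prime of the annihilator of `Y` that lies
below `p` belongs to `Ass_R Y`, so it is in the antichain `A` and therefore equals `p`.
Thus `A ⊆ Ass_R (M ⧸ N'')` (`associatedPrimes_subset_of_antichain`).

By lying over, every prime of `Ass_R (M ⧸ N'')` is the contraction of one in `Ass_S (M ⧸ N'')`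
(`exists_associatedPrime_comap_eq`), and the latter set is finite by assumption, a contradiction.
-/

open Submodule

/-- For an integral extension, associated primes over the base ring are contractions of associated
primes over the extension. -/
lemma exists_associatedPrime_comap_eq {R S X : Type*} [CommRing R] [CommRing S]
    [IsNoetherianRing R] [IsNoetherianRing S] [Algebra R S] [Algebra.IsIntegral R S]
    [AddCommGroup X] [Module S X] [Module R X] [IsScalarTower R S X]
    {p : Ideal R} (hp : p ∈ associatedPrimes R X) :
    ∃ q ∈ associatedPrimes S X, q.comap (algebraMap R S) = p := by
  obtain ⟨hprime, y, hy⟩ := isAssociatedPrime_iff.1 hp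
  have hmem : ∀ r, r ∈ p ↔ r • y = 0 := fun r => by simp [hy]
  have hJ : (Module.annihilator S (span S {y})).comap (algebraMap R S) ≤ p := by
    intro r hr
    have h := Module.mem_annihilator.1 (Ideal.mem_comap.1 hr) ⟨y, mem_span_singleton_self y⟩
    rw [hmem, ← algebraMap_smul S r y]
    exact congrArg Subtype.val h
  obtain ⟨Q, hQ, hQp, hQc⟩ := Ideal.exists_ideal_over_prime_of_isIntegral p _ hJ
  obtain ⟨q, hq, hqQ⟩ := Ideal.exists_minimalPrimes_le hQ
  have hass := Module.associatedPrimes.minimalPrimes_annihilator_subset_associatedPrimes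
    S (span S {y}) hq
  refine ⟨q, associatedPrimes.subset_of_injective (span S {y}).injective_subtype hass, ?_⟩
  refine le_antisymm ((Ideal.comap_mono hqQ).trans_eq hQc) fun r hr => ?_
  refine Ideal.mem_comap.2 (hq.1.2 (Module.mem_annihilator.2 ?_))
  rintro ⟨z, hz⟩
  obtain ⟨s, rfl⟩ := mem_span_singleton.1 hz
  ext
  rw [coe_smul, smul_comm, algebraMap_smul, (hmem r).1 hr, smul_zero, ZeroMemClass.coe_zero]

/-- Every set of associated primes of a module is the full set of associated primes of a
quotient. -/
lemma exists_associatedPrimes_quotient_eq {R Q : Type*} [CommRing R] [IsNoetherianRing R]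
    [AddCommGroup Q] [Module R Q] {A : Set (Ideal R)} (hA : A ⊆ associatedPrimes R Q) :
    ∃ K : Submodule R Q, associatedPrimes R (Q ⧸ K) = A := by
  -- A maximal submodule none of whose elements has its annihilator in `A`.
  obtain ⟨K, -, hK⟩ := zorn_le_nonempty₀
    {K : Submodule R Q | ∀ x ∈ K, (⊥ : Submodule R Q).colon {x} ∉ A} (by
      intro c hc hchain K₀ hK₀
      refine ⟨sSup c, fun x hx => ?_, fun z hz => le_sSup hz⟩
      obtain ⟨L, hL, hxL⟩ := (mem_sSup_of_directed ⟨K₀, hK₀⟩ hchain.directedOn).1 hx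
      exact hc hL x hxL) ⊥ (by
      intro x hx hxA
      obtain rfl := (mem_bot R).1 hx
      exact (hA hxA).isPrime.ne_top (by simp))
  have hKdisj : ∀ p ∈ associatedPrimes R K, p ∉ A := by
    intro p hp hpA
    obtain ⟨-, x, hx⟩ := isAssociatedPrime_iff.1 hp
    refine hK.prop x x.2 ?_
    convert hpA
    rw [hx]
    ext r
    simp only [mem_colon_singleton, mem_bot]
    rw [← coe_smul, ZeroMemClass.coe_eq_zero]
  refine ⟨K, Set.Subset.antisymm (fun p hp => ?_) fun p hp => ?_⟩
  · obtain ⟨hprime, x, hx⟩ := isAssociatedPrime_iff.1 hp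
    obtain ⟨x, rfl⟩ := K.mkQ_surjective x
    have hmem : ∀ r, r ∈ p ↔ r • x ∈ K := fun r => by
      rw [hx, mem_colon_singleton, mem_bot, ← map_smul, mkQ_apply, Quotient.mk_eq_zero]
    have hxK : x ∉ K := fun h => hprime.ne_top ((Ideal.eq_top_iff_one p).2 (by simpa [hmem]))
    -- By maximality some element of `K + R x` has its annihilator in `A`; it must equal `p`.
    have hnot : ¬ ∀ z ∈ K ⊔ span R {x}, (⊥ : Submodule R Q).colon {z} ∉ A := fun h =>
      hxK (hK.le_of_ge h le_sup_left (mem_sup_right (mem_span_singleton_self x)))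
    push Not at hnot
    obtain ⟨z, hz, hzA⟩ := hnot
    obtain ⟨k, hk, w, hw, rfl⟩ := mem_sup.1 hz
    obtain ⟨a, rfl⟩ := mem_span_singleton.1 hw
    have hzprime := (hA hzA).isPrime
    have hsub : ∀ r, r • (k + a • x) ∈ K ↔ r * a ∈ p := fun r => by
      rw [hmem, smul_add, K.add_mem_iff_right (K.smul_mem r hk), mul_smul]
    have hzK : k + a • x ∉ K := fun h => hK.prop _ h hzA
    have hap : a ∉ p := fun h => hzK (by simpa using (hsub 1).2 (by simpa using h))
    suffices (⊥ : Submodule R Q).colon {k + a • x} = p from this ▸ hzA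
    refine le_antisymm (fun r hr => ?_) fun r hr => ?_
    · rw [mem_colon_singleton, mem_bot] at hr
      exact (hprime.mem_or_mem ((hsub r).1 (hr ▸ K.zero_mem))).resolve_right hap
    · by_contra hrnot
      -- Otherwise the nonzero multiple `r • z` lies in `K` and has the same annihilator as `z`.
      refine hK.prop (r • (k + a • x)) ((hsub r).2 (p.mul_mem_right a hr)) ?_
      convert hzA using 1
      refine le_antisymm (fun t ht => ?_) fun t ht => ?_
      · rw [mem_colon_singleton, smul_smul, ← mem_colon_singleton] at ht
        exact (hzprime.mem_or_mem ht).resolve_right hrnot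
      · rw [mem_colon_singleton, smul_smul, ← mem_colon_singleton]
        exact Ideal.mul_mem_right _ _ ht
  · exact (associatedPrimes.subset_union_of_exact K.injective_subtype
      (LinearMap.exact_subtype_mkQ K) (hA hp)).resolve_left fun h => hKdisj p h hp

/-- Let `φ : X → Q` be an `R`-linear surjection from an `S`-module whose kernel contains no nonzero
`S`-submodule. Finite `S`-submodules of `X` embed over `R` in finite powers of `Q`, so they have no
associated primes outside those of `Q`; the antichain condition then forces a minimal prime of their
annihilator below a given `p ∈ Ass Q` to be `p` itself. -/
lemma associatedPrimes_subset_of_antichain {R S X Q : Type*} [CommRing R] [CommRing S]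
    [IsNoetherianRing R] [Algebra R S] [Module.Finite R S]
    [AddCommGroup X] [Module S X] [Module R X] [IsScalarTower R S X]
    [AddCommGroup Q] [Module R Q] (φ : X →ₗ[R] Q) (hsurj : Function.Surjective φ)
    (hφ : ∀ x, (∀ s : S, φ (s • x) = 0) → x = 0)
    (hanti : IsAntichain (· ≤ ·) (associatedPrimes R Q)) :
    associatedPrimes R Q ⊆ associatedPrimes R X := by
  intro p hp
  obtain ⟨hprime, x, hx⟩ := isAssociatedPrime_iff.1 hp
  obtain ⟨x, rfl⟩ := hsurj x
  have : Module.Finite R (span S {x}) := Module.Finite.trans S _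
  have hann : Module.annihilator R (span S {x}) ≤ p := by
    intro r hr
    have h := congrArg Subtype.val
      (Module.mem_annihilator.1 hr ⟨x, mem_span_singleton_self x⟩)
    have h' : r • x = 0 := h
    rw [hx, mem_colon_singleton, mem_bot, ← map_smul, h', map_zero]
  obtain ⟨p', hp', hle⟩ := Ideal.exists_minimalPrimes_le hann
  have hassY := Module.associatedPrimes.minimalPrimes_annihilator_subset_associatedPrimes
    R (span S {x}) hp'
  have hassX : p' ∈ associatedPrimes R X :=
    associatedPrimes.subset_of_injective (f := ((span S {x}).subtype.restrictScalars R))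
      (span S {x}).injective_subtype hassY
  suffices p' ∈ associatedPrimes R Q by
    rwa [← hanti.eq this hp hle]
  obtain ⟨hprime', y, hy⟩ := isAssociatedPrime_iff.1 hassX
  -- `p'` is the intersection of the annihilators of the `φ (s • y)`, for `s` in a finite generating
  -- set of `S`, so it equals one of them.
  obtain ⟨T, hT⟩ := (Module.Finite.fg_top : (⊤ : Submodule R S).FG)
  have hinf : T.inf (fun s => (⊥ : Submodule R Q).colon {φ (s • y)}) ≤ p' := by
    intro r hr
    rw [hy, mem_colon_singleton, mem_bot]
    refine hφ _ fun s => ?_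
    have hs : s ∈ span R (T : Set S) := hT ▸ mem_top
    induction hs using span_induction with
    | mem s hs =>
      have h := (Finset.inf_le (f := fun s => (⊥ : Submodule R Q).colon {φ (s • y)}) hs) hr
      rw [mem_colon_singleton, mem_bot] at h
      rw [smul_comm, map_smul, h]
    | zero => simp
    | add a b _ _ ha hb => rw [add_smul, map_add, ha, hb, add_zero]
    | smul a b _ hb => rw [smul_assoc, map_smul, hb, smul_zero]
  obtain ⟨s, -, hs⟩ := hprime'.inf_le'.1 hinf
  refine isAssociatedPrime_iff.2 ⟨hprime', φ (s • y), le_antisymm (fun r hr => ?_) hs⟩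
  rw [hy, mem_colon_singleton, mem_bot] at hr
  rw [mem_colon_singleton, mem_bot, ← map_smul, smul_comm, hr, smul_zero, map_zero]

lemma exists_infinite_antichain {R : Type*} [CommRing R] [IsNoetherianRing R] [IsLocalRing R]
    {B : Set (Ideal R)} (hB : B.Infinite) (hprime : ∀ p ∈ B, p.IsPrime) :
    ∃ A ⊆ B, A.Infinite ∧ IsAntichain (· ≤ ·) A := by
  have himage : (Ideal.height '' B).Finite := by
    have hm : (IsLocalRing.maximalIdeal R).height ≠ ⊤ := Ideal.height_ne_top_of_isPrime
    obtain ⟨n, hn⟩ := ENat.ne_top_iff_exists.1 hm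
    refine ((Set.finite_Iic n).image ((↑) : ℕ → ℕ∞)).subset ?_
    rintro _ ⟨p, hp, rfl⟩
    have h := Ideal.height_mono (IsLocalRing.le_maximalIdeal (hprime p hp).ne_top)
    rw [← hn] at h
    obtain ⟨k, hk⟩ := ENat.ne_top_iff_exists.1 (ne_top_of_le_ne_top (ENat.natCast_ne_top n) h)
    exact ⟨k, by simpa [← hk] using h, hk⟩
  by_contra! hcon
  refine hB (Set.Finite.of_finite_fibers Ideal.height himage fun h _ => ?_)
  by_contra hinf
  refine hcon _ Set.inter_subset_left hinf ?_
  rintro p ⟨hp, hph⟩ q ⟨hq, hqh⟩ hne hle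
  have := hprime p hp
  have hlt := Ideal.height_strict_mono_of_isPrime (lt_of_le_of_ne hle hne)
  rw [Set.mem_preimage, Set.mem_singleton_iff] at hph hqh
  exact hlt.ne (hph.trans hqh.symm)

/-- If `(R, m) → (S, n)` is a local homomorphism of Noetherian local rings such that `S` is
finitely generated as an `R`-module, then every weakly Laskerian `S`-module `M` is a weakly
Laskerian `R`-module (via restriction of scalars). -/
theorem weaklyLaskerian_of_finite_local_extension
    {R S : Type*} [CommRing R] [CommRing S] [IsNoetherianRing R] [IsNoetherianRing S]
    [IsLocalRing R] [IsLocalRing S] [Algebra R S] [IsLocalHom (algebraMap R S)]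
    [Module.Finite R S]
    {M : Type*} [AddCommGroup M] [Module S M] [Module R M] [IsScalarTower R S M]
    (hwl : ∀ N : Submodule S M, (associatedPrimes S (M ⧸ N)).Finite) :
    ∀ N : Submodule R M, (associatedPrimes R (M ⧸ N)).Finite := by
  intro N
  by_contra hinf
  obtain ⟨A, hAsub, hAinf, hAanti⟩ := exists_infinite_antichain hinf fun p hp => hp.isPrime
  obtain ⟨K, hK⟩ := exists_associatedPrimes_quotient_eq hAsub
  -- The quotient `(M ⧸ N) ⧸ K` plays the role of `M ⧸ N'`, with `N'` the kernel of `π`.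
  let π : M →ₗ[R] (M ⧸ N) ⧸ K := K.mkQ ∘ₗ N.mkQ
  have hπ : Function.Surjective π := K.mkQ_surjective.comp N.mkQ_surjective
  let L : Submodule S M :=
    { carrier := {m | ∀ s : S, π (s • m) = 0}
      add_mem' := fun ha hb s => by rw [smul_add, map_add, ha s, hb s, add_zero]
      zero_mem' := fun s => by rw [smul_zero, map_zero]
      smul_mem' := fun t m hm s => by rw [smul_smul]; exact hm _ }
  have hLker : L.restrictScalars R ≤ LinearMap.ker π := fun m hm => by
    simpa using (show ∀ s : S, π (s • m) = 0 from hm) 1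
  let φ : (M ⧸ L) →ₗ[R] (M ⧸ N) ⧸ K :=
    (L.restrictScalars R).liftQ π hLker ∘ₗ (Quotient.restrictScalarsEquiv R L).symm.toLinearMap
  have hφmk : ∀ m : M, φ (L.mkQ m) = π m := fun m => rfl
  have hsub : associatedPrimes R ((M ⧸ N) ⧸ K) ⊆ associatedPrimes R (M ⧸ L) := by
    refine associatedPrimes_subset_of_antichain (S := S) φ (fun z => ?_) (fun x hx => ?_)
      (hK ▸ hAanti)
    · obtain ⟨m, rfl⟩ := hπ z
      exact ⟨L.mkQ m, hφmk m⟩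
    · obtain ⟨m, rfl⟩ := L.mkQ_surjective x
      exact (Quotient.mk_eq_zero L).2 fun s => hx s
  refine hAinf (((hwl L).image (Ideal.comap (algebraMap R S))).subset fun p hp => ?_)
  exact exists_associatedPrime_comap_eq (hsub (hK ▸ hp))
end

section
/- Let a be an ideal of a commutative Noetherian ring R and let M be a finitely generated R-module. Let t be a nonnegative integer such that for each i < t, either the local cohomology module H^i_a(M) is finitely generated or Supp(H^i_a(M)) is a finite set. Then Ass_R(H^t_a(M)) is a finite set. -/
/-!
Call `FSF` the class of modules that have a finitely generated submodule with quotient of finite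
support. Over a Noetherian ring it is a Serre class; its members have finitely many associated
primes, and it contains `Ext^i(N, X)` whenever it contains `X` and `N` is finitely generated.
The hypothesis puts `H^i_a(M)` into this class for `i < t`.

Let `N_0 = M` and `N_{j+1} = I_j / N_j` be cosyzygies of `M`, with `I_j` injective, and let
`B_{j+1}` be the image of `Γ_a(I_j) → Γ_a(N_{j+1})`. There are exact sequences
`0 → Γ_a(N_j) → Γ_a(I_j) → B_{j+1} → 0` and `0 → B_{j+1} → Γ_a(N_{j+1}) → H^{j+1}_a(M) → 0`,
and `Γ_a(I_j)` is injective by Artin–Rees. Induction on `j` shows that `Ext^k(R/a, Γ_a(N_j))` for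
`j < t` and `Ext^k(R/a, B_{j+1})` for `j + 1 ≤ t` are in the class for all `k ≥ 1`.

For `t = j + 1`, the sequence `Hom(R/a, Γ_a(N_t)) → Hom(R/a, H^t_a(M)) → Ext^1(R/a, B_t)` is exact,
and the image of its first map is a subquotient of the finitely generated module `Ext^t(R/a, M)`.
Therefore `Hom(R/a, H^t_a(M))` is in the class (`hom_localCohomology_succ`). As `H^t_a(M)` is
`a`-torsion, all its associated primes are associated to this Hom module
(`associatedPrimes_subset_hom`). For `t = 0`, `H^0_a(M) ≅ Γ_a(M)` is a submodule of `M`.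

Local cohomology is defined through `Ext` as a derived functor. The comparison `extCompare` with
`Abelian.Ext` and its naturality identify `H^{j+1}_a(M)` with the cokernel of
`Γ_a(I_j) → Γ_a(N_{j+1})` (`localCohomology_succ_presentation`).
-/

universe u

namespace LocalCohomologyAss

open CategoryTheory Limits Opposite

universe v

variable {R : Type u} [CommRing R]

/-! ### Comparison of the two definitions of Ext -/

/-- The complex `Hom(P, Y)` for a projective resolution `P`. -/
noncomputable abbrev homCx {X : ModuleCat.{u} R} (P : ProjectiveResolution X) (Y : ModuleCat.{u} R) :
    CochainComplex (ModuleCat.{u} R) ℕ := P.complex.linearYonedaObj R Y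

/-- Precomposition with a chain map, as a map of Hom complexes. -/
noncomputable def homCxMap {X X' Y : ModuleCat.{u} R} {P : ProjectiveResolution X}
    {P' : ProjectiveResolution X'} (φ : P'.complex ⟶ P.complex) : homCx P Y ⟶ homCx P' Y :=
  (HomologicalComplex.unopFunctor _ _).map
    ((((linearYoneda R (ModuleCat.{u} R)).obj Y).rightOp.mapHomologicalComplex _).map φ).op

lemma homCxMap_f {X X' Y : ModuleCat.{u} R} {P : ProjectiveResolution X}
    {P' : ProjectiveResolution X'} (φ : P'.complex ⟶ P.complex) (n : ℕ) (f : P.complex.X n ⟶ Y) :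
    ((homCxMap (Y := Y) φ).f n).hom f = φ.f n ≫ f := rfl

lemma homCx_d {X Y : ModuleCat.{u} R} (P : ProjectiveResolution X) (i j : ℕ) (f : P.complex.X i ⟶ Y) :
    ((homCx P Y).d i j).hom f = P.complex.d j i ≫ f := rfl

/-- A cycle of `Hom(P, Y)` in degree `n`, viewed as a morphism `P_n ⟶ Y`. -/
noncomputable def cyc {X Y : ModuleCat.{u} R} (P : ProjectiveResolution X) (n : ℕ) :
    (homCx P Y).cycles n →ₗ[R] (P.complex.X n ⟶ Y) := ((homCx P Y).iCycles n).hom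

lemma d_cyc {X Y : ModuleCat.{u} R} (P : ProjectiveResolution X) (n m : ℕ)
    (z : (homCx P Y).cycles n) : P.complex.d m n ≫ cyc P n z = 0 :=
  congrArg (fun h => h.hom z) ((homCx P Y).iCycles_d n m)

lemma cyc_injective {X Y : ModuleCat.{u} R} (P : ProjectiveResolution X) (n : ℕ) :
    Function.Injective (cyc (Y := Y) P n) :=
  (ModuleCat.mono_iff_injective ((homCx P Y).iCycles n)).1 inferInstance

lemma exists_cyc {X Y : ModuleCat.{u} R} (P : ProjectiveResolution X) (n : ℕ)
    (f : P.complex.X n ⟶ Y) (hf : P.complex.d (n + 1) n ≫ f = 0) : ∃ z, cyc P n z = f := by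
  have h : (ShortComplex.mk ((homCx P Y).iCycles n) ((homCx P Y).d n (n+1))
      ((homCx P Y).iCycles_d _ _)).Exact :=
    ShortComplex.exact_of_f_is_kernel _ ((homCx P Y).cyclesIsKernel n (n+1) (by simp))
  exact (ShortComplex.moduleCat_exact_iff _).1 h f hf

lemma homologyπ_eq_zero_iff {X Y : ModuleCat.{u} R} (P : ProjectiveResolution X) (n : ℕ)
    (z : (homCx P Y).cycles n) : ((homCx P Y).homologyπ n).hom z = 0 ↔
      ∃ g : P.complex.X ((ComplexShape.up ℕ).prev n) ⟶ Y, P.complex.d n _ ≫ g = cyc P n z := by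
  have h : (ShortComplex.mk ((homCx P Y).toCycles ((ComplexShape.up ℕ).prev n) n)
      ((homCx P Y).homologyπ n) (by simp)).Exact :=
    ShortComplex.exact_of_g_is_cokernel _ ((homCx P Y).homologyIsCokernel _ n rfl)
  have key : ∀ g : (homCx P Y).X ((ComplexShape.up ℕ).prev n),
      cyc P n (((homCx P Y).toCycles ((ComplexShape.up ℕ).prev n) n).hom g) =
        ((homCx P Y).d ((ComplexShape.up ℕ).prev n) n).hom g := fun g =>
    congrArg (fun h => h.hom g) ((homCx P Y).toCycles_i _ n)
  constructor
  · intro hz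
    obtain ⟨g, hg⟩ := (ShortComplex.moduleCat_exact_iff _).1 h z hz
    refine ⟨g, ?_⟩
    rw [← hg]
    exact (key g).symm
  · rintro ⟨g, hg⟩
    have : ((homCx P Y).toCycles ((ComplexShape.up ℕ).prev n) n).hom g = z :=
      cyc_injective P n ((key g).trans hg)
    rw [← this]
    exact congrArg (fun h => h.hom g) ((homCx P Y).toCycles_comp_homologyπ _ n)

/-- Transports a commutative square along isomorphisms of two of its vertices; applied in the
opposite category, where `ProjectiveResolution.isoExt` is a composite of this shape. -/
lemma square_aux {E : Type*} [Category* E] {L' L K' K c' c : E} (A' : K' ⟶ L') (D : L' ⟶ L)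
    (H : K' ⟶ K) (A : K ⟶ L) (O : K ≅ c) (O' : K' ≅ c') (m : c' ⟶ c) (h : A' ≫ D = H ≫ A)
    (h2 : H ≫ O.hom = O'.hom ≫ m) : (O'.inv ≫ A') ≫ D = m ≫ O.inv ≫ A := by
  rw [Category.assoc, h, Iso.inv_comp_eq, ← Category.assoc, ← Category.assoc,
    ← h2]
  simp

/-- The computation of `Ext` by a projective resolution is natural in the first variable. -/
lemma isoExt_natural {X X' Y : ModuleCat.{u} R} (P : ProjectiveResolution X)
    (P' : ProjectiveResolution X') (u : X' ⟶ X) (φ : ProjectiveResolution.Hom P' P u) (n : ℕ) :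
    ((Ext R (ModuleCat.{u} R) n).map u.op).app Y ≫ (P'.isoExt n Y).hom =
     (P.isoExt n Y).hom ≫ HomologicalComplex.homologyMap (homCxMap (Y := Y) φ.hom) n := by
  have h := ProjectiveResolution.isoLeftDerivedObj_inv_naturality u P' P φ.hom
    (by simpa using φ.hom_f_zero_comp_π_f_zero) ((linearYoneda R (ModuleCat.{u} R)).obj Y).rightOp n
  have h2 := HomologicalComplex.homologyOp_hom_naturality (homCxMap (Y := Y) φ.hom) n
  exact congrArg Quiver.Hom.unop (square_aux _ _ _ _ ((homCx P Y).homologyOp n)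
    ((homCx P' Y).homologyOp n) _ h h2)

open Abelian in
/-- The map from cocycles of `Hom(P, Y)` to the `Ext` groups defined by the derived category. -/
noncomputable def toNew {X Y : ModuleCat.{u} R} (P : ProjectiveResolution X) (n : ℕ) :
    (homCx P Y).cycles n →ₗ[R] Ext X Y n where
  toFun z := P.extMk (cyc P n z) (n+1) rfl (d_cyc P n _ z)
  map_add' x y := by
    rw [P.add_extMk]; congr 1; simp
  map_smul' r x := by
    simp only [Ext.smul_eq_comp_mk₀, RingHom.id_apply]
    rw [P.extMk_comp_mk₀]; congr 1; simp

lemma toNew_surjective {X Y : ModuleCat.{u} R} (P : ProjectiveResolution X) (n : ℕ) :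
    Function.Surjective (toNew (Y := Y) P n) := by
  intro α
  obtain ⟨f, hf, rfl⟩ := P.extMk_surjective α (n+1) rfl
  obtain ⟨z, rfl⟩ := exists_cyc P n f hf
  exact ⟨z, rfl⟩

/-- A cocycle has trivial derived-category class exactly when it is a coboundary. In degree `0`
there are no nonzero coboundaries, and the vanishing is read off from the cohomology class. -/
lemma toNew_eq_zero_iff {X Y : ModuleCat.{u} R} (P : ProjectiveResolution X) (n : ℕ)
    (z : (homCx P Y).cycles n) : toNew P n z = 0 ↔ ((homCx P Y).homologyπ n).hom z = 0 := by
  rw [homologyπ_eq_zero_iff]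
  cases n with
  | succ n =>
    have hp : (ComplexShape.up ℕ).prev (n+1) = n := by simp
    rw [hp]
    exact P.extMk_eq_zero_iff _ _ rfl (d_cyc P _ _ z) n rfl
  | zero =>
    have hR : (∃ g : P.complex.X ((ComplexShape.up ℕ).prev 0) ⟶ Y,
        P.complex.d 0 _ ≫ g = cyc P 0 z) ↔ cyc P 0 z = 0 := by
      have hd : P.complex.d 0 ((ComplexShape.up ℕ).prev 0) = 0 := P.complex.shape _ _ (by simp)
      constructor
      · rintro ⟨g, hg⟩
        rw [← hg, hd, zero_comp]
      · intro h
        exact ⟨0, by rw [h, comp_zero]⟩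
    rw [hR]
    constructor
    · intro h
      have h' : P.extMk (cyc P 0 z) 1 rfl (d_cyc P 0 _ z) = 0 := h
      rw [← P.extEquivCohomologyClass.apply_eq_iff_eq,
        ProjectiveResolution.extEquivCohomologyClass_extMk,
        ProjectiveResolution.extEquivCohomologyClass_zero,
        CochainComplex.HomComplex.CohomologyClass.mk_eq_zero_iff,
        CochainComplex.HomComplex.Cocycle.toSingleMk_mem_coboundaries_iff _ _ _ _ _ 1 (by simp)]
        at h'
      obtain ⟨g, hg⟩ := h'
      have h0 : IsZero (P.cochainComplex.X 1) :=
        P.cochainComplex.isZero_of_isStrictlyLE 0 1 (by simp)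
      rw [h0.eq_of_src g 0, comp_zero] at hg
      rw [← cancel_epi (P.cochainComplexXIso (-((0:ℕ):ℤ)) 0 rfl).hom, ← hg, comp_zero]
    · intro h
      apply P.extMk_zero (Y := Y) (n := 0) 1 rfl |> Eq.trans _
      change P.extMk (cyc P 0 z) 1 rfl (d_cyc P 0 _ z) = _
      congr 1

/-- The comparison between `Ext` as a derived functor, which occurs in the definition of local
cohomology, and `Abelian.Ext`, which comes with long exact sequences. -/
noncomputable def extCompare {X Y : ModuleCat.{u} R} (P : ProjectiveResolution X) (n : ℕ) :
    ((Ext R (ModuleCat.{u} R) n).obj (op X)).obj Y ≃ₗ[R] Abelian.Ext X Y n :=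
  (P.isoExt n Y).toLinearEquiv ≪≫ₗ
  (((homCx P Y).homologyπ n).hom.quotKerEquivOfSurjective
    ((ModuleCat.epi_iff_surjective _).1 inferInstance)).symm ≪≫ₗ
  Submodule.quotEquivOfEq _ _ (by
    ext z
    exact (toNew_eq_zero_iff P n z).symm) ≪≫ₗ
  (toNew P n).quotKerEquivOfSurjective (toNew_surjective P n)

lemma extCompare_π {X Y : ModuleCat.{u} R} (P : ProjectiveResolution X) (n : ℕ)
    (x : ((Ext R (ModuleCat.{u} R) n).obj (op X)).obj Y) (z : (homCx P Y).cycles n)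
    (h : (P.isoExt n Y).hom.hom x = ((homCx P Y).homologyπ n).hom z) :
    extCompare P n x = toNew P n z := by
  have : (((homCx P Y).homologyπ n).hom.quotKerEquivOfSurjective
    ((ModuleCat.epi_iff_surjective _).1 inferInstance)).symm
      ((P.isoExt n Y).hom.hom x) = Submodule.Quotient.mk z := by
    rw [LinearEquiv.symm_apply_eq, h]; rfl
  simp only [extCompare, LinearEquiv.trans_apply]
  erw [this]
  rfl

lemma extCompare_natural {X X' Y : ModuleCat.{u} R} (P : ProjectiveResolution X)
    (P' : ProjectiveResolution X') (u : X' ⟶ X) (n : ℕ)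
    (x : ((Ext R (ModuleCat.{u} R) n).obj (op X)).obj Y) :
    extCompare P' n ((((Ext R (ModuleCat.{u} R) n).map u.op).app Y).hom x) =
      (Abelian.Ext.mk₀ u).comp (extCompare P n x) (zero_add n) := by
  let φ : ProjectiveResolution.Hom P' P u := ⟨ProjectiveResolution.lift u P' P, by
    simpa using ProjectiveResolution.lift_commutes_zero u P' P⟩
  obtain ⟨z, hz⟩ := (ModuleCat.epi_iff_surjective ((homCx P Y).homologyπ n)).1 inferInstance
    ((P.isoExt n Y).hom.hom x)
  rw [extCompare_π P n x z hz.symm, extCompare_π P' n _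
    ((HomologicalComplex.cyclesMap (homCxMap (Y := Y) φ.hom) n).hom z)]
  · have := ProjectiveResolution.mk₀_comp_extMk (cyc P n z) (n+1) rfl (d_cyc P n _ z) φ
    refine Eq.trans ?_ this.symm
    change P'.extMk (cyc P' n _) (n+1) rfl (d_cyc P' n _ _) = _
    congr 1
    exact congrArg (fun h => h.hom z) (HomologicalComplex.cyclesMap_i (homCxMap (Y := Y) φ.hom) n)
  · have h1 := congrArg (fun h => h.hom x) (isoExt_natural (Y := Y) P P' u φ n)
    have h2 := congrArg (fun h => h.hom z)
      (HomologicalComplex.homologyπ_naturality (homCxMap (Y := Y) φ.hom) n)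
    refine h1.trans (Eq.trans ?_ h2)
    exact congrArg _ hz.symm

/-! ### Local cohomology as a colimit -/

/-- `R/a^n` as an object of `ModuleCat R`. -/
abbrev powQuot (a : Ideal R) (n : ℕ) : ModuleCat.{u} R := ModuleCat.of R (R ⧸ a ^ n)

/-- The projection `R/a^m → R/a^n` for `n ≤ m`. -/
def powQuotMap (a : Ideal R) {n m : ℕ} (h : n ≤ m) : powQuot a m ⟶ powQuot a n :=
  ModuleCat.ofHom (Submodule.mapQ _ _ LinearMap.id (Ideal.pow_le_pow_right h))

/-- `H^i_a(M)` is the filtered colimit of the `Ext^i(R/a^n, M)`, in terms of elements and with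
`Abelian.Ext` in place of the derived functor. -/
lemma localCohomology_exists_maps (a : Ideal R) (M : ModuleCat.{u} R) (i : ℕ) :
    ∃ ι : ∀ n, Abelian.Ext (powQuot a n) M i →ₗ[R] (localCohomology a i).obj M,
      (∀ n m (h : n ≤ m) x, ι m ((Abelian.Ext.mk₀ (powQuotMap a h)).comp x (zero_add i)) = ι n x) ∧
      (∀ y, ∃ n x, ι n x = y) ∧
      (∀ n x, ι n x = 0 → ∃ m, ∃ h : n ≤ m,
        (Abelian.Ext.mk₀ (powQuotMap a h)).comp x (zero_add i) = 0) := by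
  let F : ℕᵒᵖᵒᵖ ⥤ ModuleCat.{u} R ⥤ ModuleCat.{u} R :=
    localCohomology.diagram (localCohomology.idealPowersDiagram a) i
  have : HasColimit F := localCohomology.hasColimitDiagram.{u, 0} _ i
  let G : ℕᵒᵖᵒᵖ ⥤ ModuleCat.{u} R := F ⋙ (evaluation _ _).obj M
  let c : Cocone G := ((evaluation _ _).obj M).mapCocone (colimit.cocone F)
  have hc : IsColimit c := isColimitOfPreserves ((evaluation _ _).obj M) (colimit.isColimit F)
  have : PreservesFilteredColimitsOfSize.{0, 0} (forget (ModuleCat.{u} R)) :=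
    preservesFilteredColimitsOfSize_shrink.{0, u, 0, u} _
  have : PreservesColimit G (forget (ModuleCat.{u} R)) := inferInstance
  let e : ∀ n, G.obj (op (op n)) ≃ₗ[R]
      Abelian.Ext (powQuot a n) M i := fun n => extCompare (projectiveResolution (powQuot a n)) i
  have he : ∀ n m (h : n ≤ m) x, e m ((G.map (homOfLE h).op.op).hom x) =
      (Abelian.Ext.mk₀ (powQuotMap a h)).comp (e n x) (zero_add i) := fun n m h x =>
    extCompare_natural _ _ (powQuotMap a h) i x
  let κ : ∀ n, G.obj (op (op n)) →ₗ[R] (localCohomology a i).obj M := fun n => (c.ι.app (op (op n))).hom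
  have hκ : ∀ n m (h : n ≤ m) x, κ m ((G.map (homOfLE h).op.op).hom x) = κ n x := fun n m h x =>
    congrArg (fun f => f.hom x) (c.w (homOfLE h).op.op)
  refine ⟨fun n => κ n ∘ₗ (e n).symm.toLinearMap, ?_, ?_, ?_⟩
  · intro n m h x
    obtain ⟨x, rfl⟩ := (e n).surjective x
    rw [← he]
    simp only [LinearMap.comp_apply, LinearEquiv.coe_coe, LinearEquiv.symm_apply_apply]
    exact hκ n m h x
  · intro y
    obtain ⟨j, x, hx⟩ := Concrete.isColimit_exists_rep G hc y
    refine ⟨j.unop.unop, e _ x, ?_⟩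
    simp only [LinearMap.comp_apply, LinearEquiv.coe_coe, LinearEquiv.symm_apply_apply]
    exact hx
  · intro n x hx
    obtain ⟨x, rfl⟩ := (e n).surjective x
    replace hx : κ n ((e n).symm (e n x)) = 0 := hx
    rw [LinearEquiv.symm_apply_apply] at hx
    have h0 : (c.ι.app (op (op n))) x = (c.ι.app (op (op n))) 0 := hx.trans (map_zero (κ n)).symm
    obtain ⟨k, f, g, hfg⟩ := Concrete.isColimit_exists_of_rep_eq G hc _ _ h0
    refine ⟨k.unop.unop, leOfHom f.unop.unop, ?_⟩
    rw [← he]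
    have : (homOfLE (leOfHom f.unop.unop)).op.op = f := Subsingleton.elim _ _
    rw [this]
    have h1 : (G.map f).hom x = 0 := hfg.trans (map_zero (G.map g).hom)
    rw [h1, map_zero]

/-! ### Local cohomology and cosyzygies -/

/-- The short complex `N → I → I/N` with `I` a chosen injective module containing `N`. -/
noncomputable def injSeq (N : ModuleCat.{u} R) : ShortComplex (ModuleCat.{u} R) :=
  ShortComplex.mk (Injective.ι N) (cokernel.π (Injective.ι N)) (by simp)

lemma injSeq_shortExact (N : ModuleCat.{u} R) : (injSeq N).ShortExact where
  exact := ShortComplex.exact_of_g_is_cokernel _ (cokernelIsCokernel _)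
  mono_f := by dsimp [injSeq]; infer_instance
  epi_g := by dsimp [injSeq]; infer_instance

instance (N : ModuleCat.{u} R) : Injective (injSeq N).X₂ := by dsimp [injSeq]; infer_instance

/-- The `j`-th cosyzygy of `M`: `N_0 = M` and `N_{j+1} = I_j / N_j`. -/
noncomputable def cosyz (M : ModuleCat.{u} R) : ℕ → ModuleCat.{u} R
  | 0 => M
  | j + 1 => (injSeq (cosyz M j)).X₃

/-- The Yoneda class in `Ext^j(N_j, M)` of the truncated injective resolution
`0 → M → I_0 → ⋯ → I_{j-1} → N_j → 0`. -/
noncomputable def cls (M : ModuleCat.{u} R) : ∀ j, Abelian.Ext (cosyz M j) M j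
  | 0 => Abelian.Ext.mk₀ (𝟙 M)
  | j + 1 => (injSeq_shortExact (cosyz M j)).extClass.comp (cls M j) (add_comm 1 j)

lemma comp_cls_succ {X M : ModuleCat.{u} R} (j k m : ℕ) (h : k + (j + 1) = m)
    (x : Abelian.Ext X (injSeq (cosyz M j)).X₃ k) :
    Abelian.Ext.comp (Y := cosyz M (j + 1)) x (cls M (j + 1)) h =
      (x.comp (injSeq_shortExact (cosyz M j)).extClass rfl).comp (cls M j)
        (by omega : (k + 1) + j = m) :=
  (Abelian.Ext.comp_assoc x _ (cls M j) rfl (add_comm 1 j) (by omega)).symm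

/-- Dimension shifting: `Ext^{k+1}(X, N_j) ≅ Ext^{k+1+j}(X, M)`. -/
lemma comp_cls_bijective {X M : ModuleCat.{u} R} (j k m : ℕ) (h : (k + 1) + j = m) :
    Function.Bijective (fun x : Abelian.Ext X (cosyz M j) (k + 1) => x.comp (cls M j) h) := by
  induction j generalizing k m with
  | zero =>
    obtain rfl : k + 1 = m := h
    have e : (fun x : Abelian.Ext X (cosyz M 0) (k + 1) => x.comp (cls M 0) (add_zero _)) = id :=
      funext fun x => Abelian.Ext.comp_mk₀_id x
    exact e ▸ Function.bijective_id
  | succ j ih =>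
    have e : (fun x : Abelian.Ext X (cosyz M (j + 1)) (k + 1) => x.comp (cls M (j + 1)) h) =
      (fun x : Abelian.Ext X (cosyz M j) (k + 1 + 1) => x.comp (cls M j) (by omega)) ∘
      (fun x : Abelian.Ext X (injSeq (cosyz M j)).X₃ (k + 1) =>
        x.comp (injSeq_shortExact (cosyz M j)).extClass rfl) := by
      ext x
      exact comp_cls_succ j _ m h x
    rw [e]
    refine (ih (k + 1) m (by omega)).comp ⟨?_, ?_⟩
    · have : Function.Injective ((injSeq_shortExact (cosyz M j)).extClass.postcomp X
          (rfl : k + 1 + 1 = _)) := by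
        rw [injective_iff_map_eq_zero]
        intro x hx
        obtain ⟨y, rfl⟩ := Abelian.Ext.covariant_sequence_exact₃ X
          (injSeq_shortExact (cosyz M j)) x rfl hx
        rw [Abelian.Ext.eq_zero_of_injective y, Abelian.Ext.zero_comp]
      exact this
    · intro x
      exact Abelian.Ext.covariant_sequence_exact₁ X (injSeq_shortExact (cosyz M j)) x
        (Abelian.Ext.eq_zero_of_injective _) rfl

lemma hom_comp_cls_surjective {X M : ModuleCat.{u} R} (j : ℕ) (α : Abelian.Ext X M j) :
    ∃ f : X ⟶ cosyz M j, (Abelian.Ext.mk₀ f).comp (cls M j) (zero_add j) = α := by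
  cases j with
  | zero =>
    obtain ⟨f, rfl⟩ := Abelian.Ext.homEquiv₀.symm.surjective α
    exact ⟨f, Abelian.Ext.comp_mk₀_id _⟩
  | succ j =>
    obtain ⟨β, rfl⟩ := (comp_cls_bijective (X := X) (M := M) j 0 (j + 1) (by omega)).2 α
    obtain ⟨γ, rfl⟩ := Abelian.Ext.covariant_sequence_exact₁ X (injSeq_shortExact (cosyz M j)) β
        (Abelian.Ext.eq_zero_of_injective _) rfl
    obtain ⟨f, rfl⟩ := Abelian.Ext.homEquiv₀.symm.surjective γ
    exact ⟨f, comp_cls_succ j 0 _ _ _⟩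

lemma hom_comp_cls_zero {X M : ModuleCat.{u} R} (f : X ⟶ cosyz M 0)
    (hf : (Abelian.Ext.mk₀ f).comp (cls M 0) (zero_add 0) = 0) : f = 0 := by
  have h : Abelian.Ext.mk₀ f = 0 := (Abelian.Ext.comp_mk₀_id _).symm.trans hf
  exact Abelian.Ext.mk₀_eq_zero_iff f |>.1 h

/-- The kernel of `Hom(X, N_{j+1}) → Ext^{j+1}(X, M)` consists of the maps that factor
through `I_j`. -/
lemma hom_comp_cls_succ {X M : ModuleCat.{u} R} (j : ℕ) (f : X ⟶ cosyz M (j + 1)) :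
    (Abelian.Ext.mk₀ f).comp (cls M (j + 1)) (zero_add _) = 0 ↔
      ∃ h : X ⟶ (injSeq (cosyz M j)).X₂, h ≫ (injSeq (cosyz M j)).g = f := by
  have e := comp_cls_succ (X := X) (M := M) j 0 (j + 1) (zero_add _) (Abelian.Ext.mk₀ f)
  constructor
  · intro h
    have h0 : (Abelian.Ext.mk₀ f).comp (injSeq_shortExact (cosyz M j)).extClass rfl = 0 := by
      apply (comp_cls_bijective (X := X) (M := M) j 0 (j + 1) (by omega)).1
      exact (e.symm.trans h).trans (Abelian.Ext.zero_comp ..).symm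
    obtain ⟨y, hy⟩ := Abelian.Ext.covariant_sequence_exact₃ X (injSeq_shortExact (cosyz M j)) _ rfl h0
    obtain ⟨h, rfl⟩ := Abelian.Ext.homEquiv₀.symm.surjective y
    refine ⟨h, ?_⟩
    apply (Abelian.Ext.homEquiv₀ (X := X) (Y := cosyz M (j+1))).symm.injective
    refine Eq.trans ?_ hy
    exact (Abelian.Ext.mk₀_comp_mk₀ ..).symm
  · rintro ⟨h, rfl⟩
    refine e.trans ?_
    rw [← Abelian.Ext.mk₀_comp_mk₀]
    rw [Abelian.Ext.comp_assoc _ _ _ (zero_add 0) (zero_add 1) rfl,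
      ShortComplex.ShortExact.comp_extClass, Abelian.Ext.comp_zero]
    exact Abelian.Ext.zero_comp ..

/-- `Γ_a(N)`: the submodule of elements killed by some power of `a`. -/
def gam (a : Ideal R) (N : Type*) [AddCommGroup N] [Module R N] : Submodule R N where
  carrier := {x | ∃ n : ℕ, ∀ r ∈ a ^ n, r • x = 0}
  zero_mem' := ⟨0, fun r _ => smul_zero r⟩
  add_mem' := by
    rintro x y ⟨n, hn⟩ ⟨m, hm⟩
    refine ⟨max n m, fun r hr => ?_⟩
    rw [smul_add, hn r (Ideal.pow_le_pow_right (le_max_left _ _) hr),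
      hm r (Ideal.pow_le_pow_right (le_max_right _ _) hr), add_zero]
  smul_mem' := by
    rintro c x ⟨n, hn⟩
    exact ⟨n, fun r hr => by rw [smul_comm, hn r hr, smul_zero]⟩

/-- The map `R/J → N` sending `1` to `x`. -/
def quotHom (J : Ideal R) {N : ModuleCat.{u} R} (x : N) (hx : ∀ r ∈ J, r • x = 0) :
    ModuleCat.of R (R ⧸ J) ⟶ N :=
  ModuleCat.ofHom (J.liftQ (LinearMap.toSpanSingleton R N x) hx)

lemma quotHom_one (J : Ideal R) {N : ModuleCat.{u} R} (x : N) (hx : ∀ r ∈ J, r • x = 0) :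
    (quotHom J x hx).hom (1 : R ⧸ J) = x := one_smul R x

lemma quot_hom_ext {J : Ideal R} {N : ModuleCat.{u} R} {f g : ModuleCat.of R (R ⧸ J) ⟶ N}
    (h : f.hom (1 : R ⧸ J) = g.hom (1 : R ⧸ J)) : f = g := by
  apply ModuleCat.hom_ext
  apply Submodule.linearMap_qext
  ext
  exact h

lemma smul_quot_hom_one {J : Ideal R} {N : ModuleCat.{u} R} (f : ModuleCat.of R (R ⧸ J) ⟶ N)
    (r : R) (hr : r ∈ J) : r • f.hom (1 : R ⧸ J) = 0 := by
  rw [← map_smul]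
  have : r • (1 : R ⧸ J) = 0 := by
    rw [Algebra.smul_def, mul_one]
    exact Ideal.Quotient.eq_zero_iff_mem.2 hr
  rw [this, map_zero]

/-- Since `Γ_a(N)` is the union of the `Hom(R/a^n, N)`, a compatible family of linear maps on
the latter glues to a linear map on `Γ_a(N)`. -/
lemma exists_gam_map (a : Ideal R) (N : ModuleCat.{u} R) (L : Type*) [AddCommGroup L] [Module R L]
    (ψ : ∀ n, (powQuot a n ⟶ N) →ₗ[R] L)
    (hψ : ∀ n m (h : n ≤ m) f, ψ m (powQuotMap a h ≫ f) = ψ n f) :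
    ∃ g : gam a N →ₗ[R] L, ∀ n (f : powQuot a n ⟶ N) (x : gam a N),
      f.hom (1 : R ⧸ a ^ n) = x.1 → g x = ψ n f := by
  classical
  choose k hk using fun x : gam a N => x.2
  let φ : gam a N → L := fun x => ψ (k x) (quotHom (a ^ k x) x.1 (hk x))
  have key : ∀ n (f : powQuot a n ⟶ N) (x : gam a N),
      f.hom (1 : R ⧸ a ^ n) = x.1 → φ x = ψ n f := by
    intro n f x hx
    rw [← hψ n _ (le_max_left n (k x)) f]
    change ψ (k x) _ = _
    rw [← hψ (k x) _ (le_max_right n (k x))]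
    congr 1
    apply quot_hom_ext
    exact (quotHom_one (a ^ k x) x.1 (hk x)).trans hx.symm
  refine ⟨{ toFun := φ, map_add' := ?_, map_smul' := ?_ }, key⟩
  · intro x y
    have hx : ∀ r ∈ a ^ max (k x) (k y), r • x.1 = 0 := fun r hr =>
      hk x r (Ideal.pow_le_pow_right (le_max_left _ _) hr)
    have hy : ∀ r ∈ a ^ max (k x) (k y), r • y.1 = 0 := fun r hr =>
      hk y r (Ideal.pow_le_pow_right (le_max_right _ _) hr)
    rw [key _ (quotHom _ x.1 hx) x (quotHom_one _ _ _), key _ (quotHom _ y.1 hy) y (quotHom_one _ _ _),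
      ← map_add]
    apply key
    exact congrArg₂ (· + ·) (quotHom_one _ _ hx) (quotHom_one _ _ hy)
  · intro r x
    change φ (r • x) = r • ψ _ _
    rw [← map_smul]
    apply key
    exact congrArg (r • ·) (quotHom_one _ _ (hk x))

/-- `H^j_a(M)` is a quotient of `Γ_a(N_j)`. -/
lemma localCohomology_presentation (a : Ideal R) (M : ModuleCat.{u} R) (j : ℕ) :
    ∃ g : gam a (cosyz M j) →ₗ[R] (localCohomology a j).obj M, Function.Surjective g ∧
      ∀ x, g x = 0 ↔ ∃ n, ∃ f : powQuot a n ⟶ cosyz M j, f.hom (1 : R ⧸ a ^ n) = x.1 ∧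
        (Abelian.Ext.mk₀ f).comp (cls M j) (zero_add j) = 0 := by
  obtain ⟨ι, h1, h2, h3⟩ := localCohomology_exists_maps a M j
  obtain ⟨g, hg⟩ := exists_gam_map a (cosyz M j) ((localCohomology a j).obj M)
    (fun n => ι n ∘ₗ (cls M j).postcompOfLinear R (powQuot a n) (zero_add j) ∘ₗ
      (Abelian.Ext.linearEquiv₀ (R := R)).symm.toLinearMap) (by
      intro n m h f
      have := h1 n m h ((Abelian.Ext.mk₀ f).comp (cls M j) (zero_add j))
      rw [← Abelian.Ext.comp_assoc _ _ _ (zero_add 0) (zero_add j) (by simp),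
        Abelian.Ext.mk₀_comp_mk₀] at this
      exact this)
  have hg' : ∀ n (f : powQuot a n ⟶ cosyz M j) (x : gam a (cosyz M j)),
      f.hom (1 : R ⧸ a ^ n) = x.1 →
        g x = ι n ((Abelian.Ext.mk₀ f).comp (cls M j) (zero_add j)) := hg
  refine ⟨g, ?_, ?_⟩
  · intro y
    obtain ⟨n, α, rfl⟩ := h2 y
    obtain ⟨f, rfl⟩ := hom_comp_cls_surjective j α
    exact ⟨⟨f.hom (1 : R ⧸ a ^ n), n, smul_quot_hom_one f⟩, hg' n f _ rfl⟩
  · intro x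
    constructor
    · intro hx
      obtain ⟨n, hn⟩ := x.2
      rw [hg' n (quotHom _ x.1 hn) x (quotHom_one _ _ _)] at hx
      obtain ⟨m, h, hm⟩ := h3 n _ hx
      refine ⟨m, powQuotMap a h ≫ quotHom _ x.1 hn, quotHom_one (a ^ n) x.1 hn, ?_⟩
      rw [← Abelian.Ext.comp_assoc _ _ _ (zero_add 0) (zero_add j) (by simp),
        Abelian.Ext.mk₀_comp_mk₀] at hm
      exact hm
    · rintro ⟨n, f, hf, h0⟩
      rw [hg' n f x hf, h0, map_zero]

lemma localCohomology_zero_equiv (a : Ideal R) (M : ModuleCat.{u} R) :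
    Nonempty (gam a M ≃ₗ[R] (localCohomology a 0).obj M) := by
  obtain ⟨g, hs, hk⟩ := localCohomology_presentation a M 0
  refine ⟨LinearEquiv.ofBijective g ⟨?_, hs⟩⟩
  rw [injective_iff_map_eq_zero]
  intro x hx
  obtain ⟨n, f, hf, h0⟩ := (hk x).1 hx
  rw [hom_comp_cls_zero f h0] at hf
  exact Subtype.ext hf.symm

/-- `H^{j+1}_a(M)` is the cokernel of `Γ_a(I_j) → Γ_a(N_{j+1})`. -/
lemma localCohomology_succ_presentation (a : Ideal R) (M : ModuleCat.{u} R) (j : ℕ) :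
    ∃ g : gam a (cosyz M (j + 1)) →ₗ[R] (localCohomology a (j + 1)).obj M, Function.Surjective g ∧
      ∀ x, g x = 0 ↔ ∃ y ∈ gam a (injSeq (cosyz M j)).X₂, (injSeq (cosyz M j)).g.hom y = x.1 := by
  obtain ⟨g, hs, hk⟩ := localCohomology_presentation a M (j + 1)
  refine ⟨g, hs, fun x => (hk x).trans ⟨?_, ?_⟩⟩
  · rintro ⟨n, f, hf, h0⟩
    obtain ⟨h, rfl⟩ := (hom_comp_cls_succ j f).1 h0
    exact ⟨h.hom (1 : R ⧸ a ^ n), ⟨n, smul_quot_hom_one h⟩, hf⟩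
  · rintro ⟨y, ⟨n, hn⟩, hy⟩
    refine ⟨n, quotHom _ y hn ≫ (injSeq (cosyz M j)).g, ?_, (hom_comp_cls_succ j _).2 ⟨_, rfl⟩⟩
    rw [← hy]
    exact congrArg (injSeq (cosyz M j)).g.hom (quotHom_one _ y hn)

/-! ### The class of finitely generated by finite support modules -/

/-- The class of modules with a finitely generated submodule such that the quotient has finite
support. Over a Noetherian ring this is a Serre class. -/
def FSF (R : Type u) [CommRing R] (X : Type v) [AddCommGroup X] [Module R X] : Prop :=
  ∃ N : Submodule R X, N.FG ∧ (Module.support R (X ⧸ N)).Finite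

section ModuleClass
variable {A : Type*} {B : Type*} {C : Type*} [AddCommGroup A] [Module R A] [AddCommGroup B]
  [Module R B] [AddCommGroup C] [Module R C]

lemma notMem_support_quotient {N : Submodule R A} {p : PrimeSpectrum R} :
    p ∉ Module.support R (A ⧸ N) ↔ ∀ x : A, ∃ r ∉ p.asIdeal, r • x ∈ N := by
  rw [Module.notMem_support_iff']
  constructor
  · intro h x
    obtain ⟨r, hr, h⟩ := h (N.mkQ x)
    exact ⟨r, hr, (Submodule.Quotient.mk_eq_zero N).1 h⟩
  · intro h x
    obtain ⟨x, rfl⟩ := N.mkQ_surjective x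
    obtain ⟨r, hr, h⟩ := h x
    exact ⟨r, hr, (Submodule.Quotient.mk_eq_zero N).2 h⟩

lemma FSF.of_finite [Module.Finite R A] : FSF R A :=
  ⟨⊤, Module.Finite.fg_top, by rw [Module.support_eq_empty]; exact Set.finite_empty⟩

lemma FSF.of_support (h : (Module.support R A).Finite) : FSF R A :=
  ⟨⊥, Submodule.fg_bot, h.subset
    (Module.support_subset_of_surjective (Submodule.mkQ ⊥) (Submodule.mkQ_surjective _))⟩

lemma FSF.of_surjective (h : FSF R A) (f : A →ₗ[R] B) (hf : Function.Surjective f) : FSF R B := by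
  obtain ⟨N, hN, hS⟩ := h
  refine ⟨N.map f, hN.map f, hS.subset fun p => ?_⟩
  contrapose
  simp only [notMem_support_quotient]
  intro h b
  obtain ⟨a, rfl⟩ := hf b
  obtain ⟨r, hr, h⟩ := h a
  exact ⟨r, hr, r • a, h, map_smul f r a⟩

lemma FSF.of_injective [IsNoetherianRing R] (h : FSF R B) (f : A →ₗ[R] B)
    (hf : Function.Injective f) : FSF R A := by
  obtain ⟨N, hN, hS⟩ := h
  refine ⟨N.comap f, ?_, hS.subset fun p => ?_⟩
  · have : Module.Finite R N := Module.Finite.iff_fg.2 hN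
    exact Module.Finite.iff_fg.1 (Module.Finite.of_injective
      (f.restrict (p := N.comap f) (q := N) fun x hx => hx)
      fun x y h => Subtype.ext (hf (congrArg Subtype.val h)))
  · contrapose
    simp only [notMem_support_quotient]
    intro h a
    obtain ⟨r, hr, h⟩ := h (f a)
    exact ⟨r, hr, by rwa [Submodule.mem_comap, map_smul]⟩

lemma FSF.of_equiv (h : FSF R A) (f : A ≃ₗ[R] B) : FSF R B :=
  h.of_surjective f.toLinearMap f.surjective

lemma FSF.of_exact [IsNoetherianRing R] (hA : FSF R A) (hC : FSF R C) (f : A →ₗ[R] B)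
    (g : B →ₗ[R] C) (hfg : ∀ b, g b = 0 → ∃ a, f a = b) : FSF R B := by
  classical
  obtain ⟨N, hN, hNS⟩ := hA
  obtain ⟨L, hL, hLS⟩ := hC.of_injective (LinearMap.range g).subtype Subtype.val_injective
  obtain ⟨s, rfl⟩ := hL
  choose k hk using LinearMap.surjective_rangeRestrict g
  refine ⟨N.map f ⊔ Submodule.span R (k '' s),
    (hN.map f).sup (Submodule.fg_span (s.finite_toSet.image k)), (hNS.union hLS).subset fun p => ?_⟩
  contrapose
  simp only [Set.mem_union, not_or, notMem_support_quotient]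
  rintro ⟨h1, h2⟩ b
  obtain ⟨r, hr, h⟩ := h2 (g.rangeRestrict b)
  have h3 : Submodule.span R (s : Set (LinearMap.range g)) =
      (Submodule.span R (k '' s)).map g.rangeRestrict := by
    rw [Submodule.map_span, Set.image_image]
    simp only [hk, Set.image_id']
  rw [h3] at h
  obtain ⟨c, hc, hcb⟩ := h
  obtain ⟨a, ha⟩ := hfg (r • b - c) (by
    rw [map_sub, map_smul, sub_eq_zero]
    exact (congrArg Subtype.val hcb).symm)
  obtain ⟨r', hr', h'⟩ := h1 a
  refine ⟨r' * r, fun hh => (p.2.mem_or_mem hh).elim hr' hr, ?_⟩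
  have : (r' * r) • b = f (r' • a) + r' • c := by
    rw [map_smul, ha, smul_sub, mul_smul, sub_add_cancel]
  rw [this]
  exact add_mem (Submodule.mem_sup_left ⟨_, h', rfl⟩)
    (Submodule.mem_sup_right (Submodule.smul_mem _ _ hc))

/-- If `β` kills the kernel of `α`, then `range β` is a quotient of `range α`, hence a
subquotient of the target of `α`. -/
lemma FSF.range_of_ker_le [IsNoetherianRing R] (hE : FSF R C) (α : A →ₗ[R] C) (β : A →ₗ[R] B)
    (h : LinearMap.ker α ≤ LinearMap.ker β) : FSF R (LinearMap.range β) := by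
  have h1 : FSF R (A ⧸ LinearMap.ker α) := hE.of_injective ((LinearMap.ker α).liftQ α le_rfl)
    (by rw [← LinearMap.ker_eq_bot]; exact Submodule.ker_liftQ_eq_bot' _ _ rfl)
  refine h1.of_surjective ((LinearMap.ker α).liftQ β.rangeRestrict
    (by rw [LinearMap.ker_rangeRestrict]; exact h)) ?_
  rintro ⟨_, a, rfl⟩
  exact ⟨Submodule.Quotient.mk a, rfl⟩

lemma FSF.pi [IsNoetherianRing R] (hA : FSF R A) (n : ℕ) : FSF R (Fin n → A) := by
  induction n with
  | zero => exact FSF.of_finite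
  | succ n ih =>
    refine FSF.of_exact ih hA (LinearMap.pi (Fin.cons 0 LinearMap.proj)) (LinearMap.proj 0)
      fun b hb => ⟨fun i => b i.succ, ?_⟩
    ext i
    cases i using Fin.cases with
    | zero => exact hb.symm
    | succ i => rfl

lemma FSF.hom [IsNoetherianRing R] [Module.Finite R B] (hA : FSF R A) : FSF R (B →ₗ[R] A) := by
  obtain ⟨n, f, hf⟩ := Module.Finite.exists_fin' R B
  exact (hA.pi n).of_injective
    (LinearMap.pi fun i => LinearMap.applyₗ (f (Pi.single i 1))) fun x y h => by
      have : x ∘ₗ f = y ∘ₗ f := by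
        apply LinearMap.pi_ext'
        intro i
        ext
        exact congrFun h i
      ext b
      obtain ⟨b, rfl⟩ := hf b
      exact LinearMap.congr_fun this b

lemma mem_associatedPrimes_iff [IsNoetherianRing R] {p : Ideal R} :
    p ∈ associatedPrimes R A ↔ p.IsPrime ∧ ∃ x : A, ∀ r, r ∈ p ↔ r • x = 0 := by
  rw [AssociatedPrimes.mem_iff, isAssociatedPrime_iff]
  simp only [Ideal.ext_iff, Submodule.mem_colon_singleton, Submodule.mem_bot]

lemma FSF.finite_associatedPrimes [IsNoetherianRing R] (hA : FSF R A) :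
    (associatedPrimes R A).Finite := by
  obtain ⟨N, hN, hS⟩ := hA
  have : Module.Finite R N := Module.Finite.iff_fg.2 hN
  have h1 : (associatedPrimes R (A ⧸ N)).Finite := by
    refine (hS.image PrimeSpectrum.asIdeal).subset ?_
    intro p hp
    obtain ⟨hp', x, hx⟩ := mem_associatedPrimes_iff.1 hp
    exact ⟨⟨p, hp'⟩, Module.mem_support_iff'.2 ⟨x, fun r hr h => hr ((hx r).2 h)⟩, rfl⟩
  exact ((associatedPrimes.finite R N).union h1).subset
    (associatedPrimes.subset_union_of_exact N.injective_subtype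
      (LinearMap.exact_subtype_mkQ N))

/-- For an `a`-torsion module `A`, an associated prime `p = ann x` contains `a`, so `x` defines
a map `R/a → A` with annihilator `p`. -/
lemma associatedPrimes_subset_hom [IsNoetherianRing R] (a : Ideal R)
    (h : ∀ x : A, ∃ n : ℕ, ∀ r ∈ a ^ n, r • x = 0) :
    associatedPrimes R A ⊆ associatedPrimes R ((R ⧸ a) →ₗ[R] A) := by
  intro p hp
  obtain ⟨hp', x, hx⟩ := mem_associatedPrimes_iff.1 hp
  obtain ⟨n, hn⟩ := h x
  have hap : a ≤ p := hp'.le_of_pow_le fun r hr => (hx r).2 (hn r hr)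
  refine mem_associatedPrimes_iff.2 ⟨hp', Submodule.liftQ a (LinearMap.toSpanSingleton R A x)
    fun r hr => (hx r).1 (hap hr), fun r => ?_⟩
  rw [hx r]
  constructor
  · intro hr
    apply Submodule.linearMap_qext
    ext
    exact (congrArg (r • ·) (one_smul R x)).trans hr
  · intro hr
    exact (congrArg (r • ·) (one_smul R x)).symm.trans
      (LinearMap.congr_fun hr (Submodule.Quotient.mk 1))
end ModuleClass

/-! ### Ext and torsion submodules of injectives -/

/-- By dimension shifting along a finite free presentation of `N`. -/
lemma FSF.ext [IsNoetherianRing R] (N X : ModuleCat.{u} R) [Module.Finite R N] (hX : FSF R X)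
    (i : ℕ) : FSF R (Abelian.Ext N X i) := by
  induction i generalizing N with
  | zero =>
    exact (hX.hom (B := N)).of_equiv
      (Abelian.Ext.linearEquiv₀.trans ModuleCat.homLinearEquiv).symm
  | succ n ih =>
    obtain ⟨N, _, _, _, _, f, surjf⟩ := Module.exists_finite_presentation R N
    let exac := LinearMap.shortExact_shortComplexKer surjf
    have : Module.Finite R f.shortComplexKer.X₁ := by dsimp; infer_instance
    exact (ih f.shortComplexKer.X₁).of_surjective (exac.extClass.precompOfLinear R X (add_comm 1 n))
      (precomp_extClass_surjective_of_projective_X₂ X exac n)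

/-- `Γ_a` preserves injectivity. By Artin–Rees, a map `g : J → Γ_a(I)` from an ideal kills
`J ∩ a^m` for large `m`; extending the induced map to `R/a^m → I` gives a map into `Γ_a(I)`. -/
lemma gam_injective [IsNoetherianRing R] (a : Ideal R) (I : ModuleCat.{u} R) [Injective I] :
    Injective (ModuleCat.of R (gam a I)) := by
  have hI : Module.Injective R I := Module.injective_module_of_injective_object R I
  suffices h : Module.Injective R (gam a I) from Module.injective_object_of_injective_module R _
  apply Module.Baer.injective
  intro J g
  obtain ⟨n, hn⟩ : ∃ n : ℕ, ∀ r ∈ a ^ n, ∀ y : J, r • g y = 0 := by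
    have hfg : (⊤ : Submodule R J).FG := IsNoetherian.noetherian _
    obtain ⟨s, hs⟩ := hfg
    choose k hk using fun y : J => (g y).2
    refine ⟨s.sup k, fun r hr y => ?_⟩
    have : y ∈ Submodule.span R (s : Set J) := hs ▸ Submodule.mem_top
    induction this using Submodule.span_induction with
    | mem y hy =>
      exact Subtype.ext (hk y r (Ideal.pow_le_pow_right (Finset.le_sup (f := k) hy) hr))
    | zero => rw [map_zero, smul_zero]
    | add x y _ _ hx hy => rw [map_add, smul_add, hx, hy, add_zero]
    | smul c x _ hx => rw [map_smul, smul_comm, hx, smul_zero]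
  obtain ⟨k, hk⟩ := Ideal.exists_pow_inf_eq_pow_smul a J
  -- `g` kills `a ^ (n + k) ∩ J`
  have h0 : ∀ y : J, (y : R) ∈ a ^ (n + k) → g y = 0 := by
    have h1 : a ^ (n + k) ⊓ J ≤ a ^ n • J := by
      have := hk (n + k) (by omega)
      rw [smul_eq_mul, Ideal.mul_top, Nat.add_sub_cancel] at this
      rw [this]
      exact Submodule.smul_mono le_rfl inf_le_right
    have h2 : ∀ z ∈ a ^ n • J, ∀ hz : z ∈ J, g ⟨z, hz⟩ = 0 := by
      intro z hz
      induction hz using Submodule.smul_induction_on' with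
      | smul r hr m hm =>
        intro hz
        have : (⟨r • m, hz⟩ : J) = r • ⟨m, hm⟩ := rfl
        rw [this, map_smul, hn r hr]
      | add x hx y hy h1 h2 =>
        intro hz
        have hx' : x ∈ J := Submodule.smul_le_right hx
        have hy' : y ∈ J := Submodule.smul_le_right hy
        have : (⟨x + y, hz⟩ : J) = ⟨x, hx'⟩ + ⟨y, hy'⟩ := rfl
        rw [this, map_add, h1, h2, add_zero]
    exact fun y hy => h2 y (h1 ⟨hy, y.2⟩) y.2
  -- extend along `J / (J ∩ a ^ (n + k)) → R / a ^ (n + k)`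
  let K := a ^ (n + k)
  let i : (J ⧸ Submodule.comap J.subtype K) →ₗ[R] (R ⧸ K) :=
    Submodule.mapQ _ _ J.subtype le_rfl
  have hi : Function.Injective i := by
    rw [← LinearMap.ker_eq_bot]
    exact Submodule.ker_liftQ_eq_bot' _ _ (by rw [LinearMap.ker_comp, Submodule.ker_mkQ])
  obtain ⟨f, hf⟩ := Module.Injective.extension_property R _ _ _ i hi
    ((gam a I).subtype ∘ₗ Submodule.liftQ (Submodule.comap J.subtype K) g fun y hy => h0 y hy)
  refine ⟨LinearMap.codRestrict (gam a I) (f ∘ₗ Submodule.mkQ K) fun x => ⟨n + k, fun r hr => ?_⟩,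
    fun x hx => Subtype.ext ?_⟩
  · have : Submodule.mkQ K (r • x) = 0 :=
      (Submodule.Quotient.mk_eq_zero K).2 (Ideal.mul_mem_right x _ hr)
    rw [← map_smul, LinearMap.comp_apply, this, map_zero]
  · exact LinearMap.congr_fun hf (Submodule.Quotient.mk ⟨x, hx⟩)

/-- `Ext^k(X, S.X₁) → Ext^k(X, S.X₂) → Ext^k(X, S.X₃)` is exact. -/
lemma FSF.ext_middle [IsNoetherianRing R] {S : ShortComplex (ModuleCat.{u} R)} (hS : S.ShortExact)
    (X : ModuleCat.{u} R) (k : ℕ) (h1 : FSF R (Abelian.Ext X S.X₁ k))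
    (h3 : FSF R (Abelian.Ext X S.X₃ k)) : FSF R (Abelian.Ext X S.X₂ k) :=
  FSF.of_exact h1 h3 ((Abelian.Ext.mk₀ S.f).postcompOfLinear R X (add_zero k))
    ((Abelian.Ext.mk₀ S.g).postcompOfLinear R X (add_zero k))
    fun b hb => Abelian.Ext.covariant_sequence_exact₂ X hS b hb

/-- When the middle term is injective, the connecting map
`Ext^{k+1}(X, S.X₃) → Ext^{k+2}(X, S.X₁)` is injective. -/
lemma FSF.ext_right [IsNoetherianRing R] {S : ShortComplex (ModuleCat.{u} R)} (hS : S.ShortExact)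
    [Injective S.X₂]
    (X : ModuleCat.{u} R) (k : ℕ) (h1 : FSF R (Abelian.Ext X S.X₁ (k + 2))) :
    FSF R (Abelian.Ext X S.X₃ (k + 1)) :=
  h1.of_injective (hS.extClass.postcompOfLinear R X rfl) <| by
    rw [injective_iff_map_eq_zero]
    intro x hx
    obtain ⟨y, rfl⟩ := Abelian.Ext.covariant_sequence_exact₃ X hS x rfl hx
    rw [Abelian.Ext.eq_zero_of_injective y, Abelian.Ext.zero_comp]

lemma shortExact_of_linear {A B C : Type u} [AddCommGroup A] [Module R A] [AddCommGroup B]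
    [Module R B] [AddCommGroup C] [Module R C] (f : A →ₗ[R] B) (g : B →ₗ[R] C)
    (hf : Function.Injective f) (hg : Function.Surjective g) (h : Function.Exact f g) :
    (ShortComplex.mk (ModuleCat.ofHom f) (ModuleCat.ofHom g)
      (by ext x; exact h.apply_apply_eq_zero x)).ShortExact where
  exact := (ShortComplex.moduleCat_exact_iff _).2 fun x hx => (h x).1 hx
  mono_f := (ModuleCat.mono_iff_injective _).2 hf
  epi_g := (ModuleCat.epi_iff_surjective _).2 hg

/-! ### The induction -/

/-- `Γ_a(I_j) → Γ_a(N_{j+1})`. Its range is written `B_{j+1}` in comments. -/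
noncomputable def gamMap (a : Ideal R) (M : ModuleCat.{u} R) (j : ℕ) :
    gam a (injSeq (cosyz M j)).X₂ →ₗ[R] gam a (cosyz M (j + 1)) :=
  LinearMap.restrict (injSeq (cosyz M j)).g.hom fun x ⟨n, hn⟩ => ⟨n, fun r hr => by
    have := congrArg (injSeq (cosyz M j)).g.hom (hn r hr)
    rwa [map_smul, map_zero] at this⟩

/-- Dimension shifting along `0 → Γ_a(N_j) → Γ_a(I_j) → B_{j+1} → 0`. -/
lemma ext_range_gamMap [IsNoetherianRing R] (a : Ideal R) (M : ModuleCat.{u} R) (j : ℕ)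
    (X : ModuleCat.{u} R)
    (h : ∀ k, FSF R (Abelian.Ext X (ModuleCat.of R (gam a (cosyz M j))) (k + 1))) (k : ℕ) :
    FSF R (Abelian.Ext X (ModuleCat.of R (LinearMap.range (gamMap a M j))) (k + 1)) := by
  have hS := injSeq_shortExact (cosyz M j)
  have hinj : Function.Injective (injSeq (cosyz M j)).f.hom :=
    (ModuleCat.mono_iff_injective _).1 hS.mono_f
  let i : gam a (cosyz M j) →ₗ[R] gam a (injSeq (cosyz M j)).X₂ :=
    LinearMap.restrict (injSeq (cosyz M j)).f.hom fun x ⟨n, hn⟩ => ⟨n, fun r hr =>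
      (map_smul (injSeq (cosyz M j)).f.hom r x).symm.trans
        ((congrArg (injSeq (cosyz M j)).f.hom (hn r hr)).trans
          (map_zero (injSeq (cosyz M j)).f.hom))⟩
  have hT := shortExact_of_linear i (gamMap a M j).rangeRestrict
    (fun x y hxy => Subtype.ext (hinj (congrArg Subtype.val hxy)))
    (LinearMap.surjective_rangeRestrict _) (by
      intro y
      constructor
      · intro hy
        have hy' : (injSeq (cosyz M j)).g.hom y.1 = 0 :=
          congrArg Subtype.val (congrArg Subtype.val hy)
        obtain ⟨x, hx⟩ := (ShortComplex.moduleCat_exact_iff _).1 hS.exact y.1 hy'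
        obtain ⟨n, hn⟩ := y.2
        refine ⟨⟨x, n, fun r hr => hinj ?_⟩, Subtype.ext hx⟩
        exact (map_smul (injSeq (cosyz M j)).f.hom r x).trans
          ((congrArg (r • ·) hx).trans ((hn r hr).trans (map_zero _).symm))
      · rintro ⟨x, rfl⟩
        exact Subtype.ext (Subtype.ext
          (congrArg (fun f => f.hom x.1) (injSeq (cosyz M j)).zero)))
  have : Injective (ModuleCat.of R (gam a (injSeq (cosyz M j)).X₂)) := gam_injective a _
  exact FSF.ext_right hT X k (h (k + 1))

/-- The sequence `0 → B_{j+1} → Γ_a(N_{j+1}) → H^{j+1}_a(M) → 0`. -/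
lemma localCohomology_shortExact (a : Ideal R) (M : ModuleCat.{u} R) (j : ℕ) :
    ∃ g : gam a (cosyz M (j + 1)) →ₗ[R] (localCohomology a (j + 1)).obj M,
      Function.Surjective g ∧ LinearMap.ker g = LinearMap.range (gamMap a M j) := by
  obtain ⟨g, hg, hk⟩ := localCohomology_succ_presentation a M j
  refine ⟨g, hg, ?_⟩
  ext x
  rw [LinearMap.mem_ker, hk]
  constructor
  · rintro ⟨y, hy, h⟩
    exact ⟨⟨y, hy⟩, Subtype.ext h⟩
  · rintro ⟨y, rfl⟩
    exact ⟨y.1, y.2, rfl⟩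

/-- If `H^i_a(M)` is in the class for `i ≤ j`, so are the higher `Ext` modules of `Γ_a(N_j)`. -/
lemma ext_gam_cosyz [IsNoetherianRing R] (a : Ideal R) (M X : ModuleCat.{u} R)
    [Module.Finite R M] [Module.Finite R X] (j : ℕ)
    (h : ∀ i, i ≤ j → FSF R ((localCohomology a i).obj M)) (k : ℕ) :
    FSF R (Abelian.Ext X (ModuleCat.of R (gam a (cosyz M j))) (k + 1)) := by
  induction j generalizing k with
  | zero =>
    have hM : FSF R M := FSF.of_finite
    exact FSF.ext X (ModuleCat.of R (gam a M))
      (hM.of_injective (gam a M).subtype Subtype.val_injective) (k + 1)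
  | succ j ih =>
    obtain ⟨g, hg, hk⟩ := localCohomology_shortExact a M j
    have hS := shortExact_of_linear (LinearMap.range (gamMap a M j)).subtype g
      Subtype.val_injective hg (by rw [LinearMap.exact_iff, hk, Submodule.range_subtype])
    exact FSF.ext_middle hS X (k + 1)
      (ext_range_gamMap a M j X (ih fun i hi => h i (by omega)) k)
      (FSF.ext X _ (h (j + 1) le_rfl) (k + 1))

/-- If `H^i_a(M)` is in the class for `i ≤ j`, then so is `Hom(R/a, H^{j+1}_a(M))`. -/
lemma hom_localCohomology_succ [IsNoetherianRing R] (a : Ideal R) (M : ModuleCat.{u} R)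
    [Module.Finite R M] (j : ℕ) (h : ∀ i, i ≤ j → FSF R ((localCohomology a i).obj M)) :
    FSF R ((R ⧸ a) →ₗ[R] (localCohomology a (j + 1)).obj M) := by
  let X : ModuleCat.{u} R := ModuleCat.of R (R ⧸ a)
  have : Module.Finite R X := inferInstanceAs (Module.Finite R (R ⧸ a))
  obtain ⟨g, hg, hk⟩ := localCohomology_shortExact a M j
  have hS := shortExact_of_linear (LinearMap.range (gamMap a M j)).subtype g
    Subtype.val_injective hg (by rw [LinearMap.exact_iff, hk, Submodule.range_subtype])
  let ι : ModuleCat.of R (gam a (cosyz M (j + 1))) ⟶ cosyz M (j + 1) :=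
    ModuleCat.ofHom (gam a (cosyz M (j + 1))).subtype
  let α : Abelian.Ext X (ModuleCat.of R (gam a (cosyz M (j + 1)))) 0 →ₗ[R]
      Abelian.Ext X M (j + 1) :=
    (cls M (j + 1)).postcompOfLinear R X (zero_add (j + 1)) ∘ₗ
      (Abelian.Ext.mk₀ ι).postcompOfLinear R X (add_zero 0)
  let β : Abelian.Ext X (ModuleCat.of R (gam a (cosyz M (j + 1)))) 0 →ₗ[R]
      Abelian.Ext X ((localCohomology a (j + 1)).obj M) 0 :=
    (Abelian.Ext.mk₀ (ModuleCat.ofHom g)).postcompOfLinear R X (add_zero 0)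
  -- A map `R/a → Γ_a(N_{j+1})` with trivial class in `Ext^{j+1}(R/a, M)` lifts to `I_j`, and the
  -- lift lands in `Γ_a(I_j)`, so the map dies in `H^{j+1}_a(M)`.
  have hαβ : LinearMap.ker α ≤ LinearMap.ker β := by
    intro x hx
    obtain ⟨f, rfl⟩ := Abelian.Ext.homEquiv₀.symm.surjective x
    have hx' : (Abelian.Ext.mk₀ (f ≫ ι)).comp (cls M (j + 1)) (zero_add (j + 1)) = 0 := by
      rw [← Abelian.Ext.mk₀_comp_mk₀]
      exact hx
    obtain ⟨l, hl⟩ := (hom_comp_cls_succ j (f ≫ ι)).1 hx'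
    have h0 : f ≫ ModuleCat.ofHom g = 0 := by
      apply quot_hom_ext
      change g (f.hom (1 : R ⧸ a)) = 0
      rw [← LinearMap.mem_ker, hk]
      refine ⟨⟨l.hom (1 : R ⧸ a), 1, fun r hr => smul_quot_hom_one l r (by rwa [pow_one] at hr)⟩,
        Subtype.ext (congrArg (fun f => f.hom (1 : R ⧸ a)) hl)⟩
    refine (Abelian.Ext.mk₀_comp_mk₀ f (ModuleCat.ofHom g)).trans ?_
    rw [h0, Abelian.Ext.mk₀_zero]
  have hM : FSF R M := FSF.of_finite
  have h1 : FSF R (LinearMap.range β) := (FSF.ext X M hM (j + 1)).range_of_ker_le α β hαβ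
  have h2 := ext_range_gamMap a M j X (ext_gam_cosyz a M X j h) 0
  have h3 : FSF R (Abelian.Ext X ((localCohomology a (j + 1)).obj M) 0) :=
    FSF.of_exact h1 h2 (LinearMap.range β).subtype (hS.extClass.postcompOfLinear R X (zero_add 1))
      fun b hb => by
        obtain ⟨y, hy⟩ := Abelian.Ext.covariant_sequence_exact₃ X hS b (zero_add 1) hb
        exact ⟨⟨b, y, hy⟩, rfl⟩
  exact h3.of_equiv (Abelian.Ext.linearEquiv₀.trans ModuleCat.homLinearEquiv)

end LocalCohomologyAss

open LocalCohomologyAss in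
/-- If `M` is a finitely generated module over a Noetherian ring `R`, `a` an ideal of `R`,
and `t` a nonnegative integer such that for each `i < t` the local cohomology module
`H^i_a(M)` is either finitely generated or has finite support, then `Ass (H^t_a(M))`
is a finite set. -/
theorem associatedPrimes_localCohomology_finite {R : Type u} [CommRing R] [IsNoetherianRing R]
    (a : Ideal R) {M : Type u} [AddCommGroup M] [Module R M] [Module.Finite R M] (t : ℕ)
    (h : ∀ i < t, Module.Finite R ((localCohomology a i).obj (ModuleCat.of R M)) ∨
      (Module.support R ((localCohomology a i).obj (ModuleCat.of R M))).Finite) :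
    (associatedPrimes R ((localCohomology a t).obj (ModuleCat.of R M))).Finite := by
  have h' : ∀ i < t, FSF R ((localCohomology a i).obj (ModuleCat.of R M)) := fun i hi =>
    (h i hi).elim (fun _ => FSF.of_finite) FSF.of_support
  cases t with
  | zero =>
    obtain ⟨e⟩ := localCohomology_zero_equiv a (ModuleCat.of R M)
    have hM : FSF R M := FSF.of_finite
    exact ((hM.of_injective (gam a M).subtype Subtype.val_injective).of_equiv
      e).finite_associatedPrimes
  | succ j =>
    refine (hom_localCohomology_succ a (ModuleCat.of R M) j
      fun i hi => h' i (by omega)).finite_associatedPrimes.subset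
      (associatedPrimes_subset_hom a fun x => ?_)
    obtain ⟨g, hg, -⟩ := localCohomology_shortExact a (ModuleCat.of R M) j
    obtain ⟨y, rfl⟩ := hg x
    obtain ⟨n, hn⟩ := y.2
    refine ⟨n, fun r hr => ?_⟩
    rw [← map_smul, show r • y = 0 from Subtype.ext (hn r hr), map_zero]
end
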